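/- arXiv:1712.09477 — 2 statements merged into one kernel-verified Lean document; each statement's English description precedes it below -/
import Mathlib

section
/- Every double spider DS(L, P^core, R) in which both branch vertices have degree exactly 3 (deg(v_l) = deg(v_r) = 3) is strongly antimagic. -/
open Classical

noncomputable section

/-- The vertex sum at `u` of an edge labeling `f`: the sum of the labels of the
edges incident to `u`. -/
def vertexSum {V : Type*} [Fintype V] (G : SimpleGraph V) (f : Sym2 V → ℕ) (u : V) : ℕ :=
  ∑ e ∈ G.incidenceFinset u, f e

/-- `f` is an antimagic labeling of `G`: it is a bijection from the edge set of `G`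
onto `{1, …, |E|}` and the vertex sums are pairwise distinct. -/
def IsAntimagicLabeling {V : Type*} [Fintype V] (G : SimpleGraph V)
    (f : Sym2 V → ℕ) : Prop :=
  Set.BijOn f G.edgeSet (Set.Icc 1 G.edgeFinset.card) ∧
  Function.Injective (vertexSum G f)

/-- `f` is a strongly antimagic labeling of `G`: it is an antimagic labeling and moreover
`deg u < deg v` implies `vertexSum u < vertexSum v`. -/
def IsStronglyAntimagicLabeling {V : Type*} [Fintype V] (G : SimpleGraph V)
    (f : Sym2 V → ℕ) : Prop :=
  Set.BijOn f G.edgeSet (Set.Icc 1 G.edgeFinset.card) ∧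
  Function.Injective (vertexSum G f) ∧
  ∀ u v : V, G.degree u < G.degree v → vertexSum G f u < vertexSum G f v

/-- `G` is antimagic if it admits an antimagic labeling. -/
def IsAntimagic {V : Type*} [Fintype V] (G : SimpleGraph V) : Prop :=
  ∃ f : Sym2 V → ℕ, IsAntimagicLabeling G f

/-- `G` is strongly antimagic if it admits a strongly antimagic labeling. -/
def IsStronglyAntimagic {V : Type*} [Fintype V] (G : SimpleGraph V) : Prop :=
  ∃ f : Sym2 V → ℕ, IsStronglyAntimagicLabeling G f

/-- The vertex type of a double spider: the core path has vertices `0, …, s`,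
and each leg of length `ℓ` (an entry of `L` or of `R`) contributes `ℓ` further
vertices, at distances `1, …, ℓ` from the branch vertex it is attached to. -/
abbrev DSVert (s : ℕ) (L R : List ℕ) : Type :=
  Fin (s + 1) ⊕ (((i : Fin L.length) × Fin (L.get i)) ⊕ ((i : Fin R.length) × Fin (R.get i)))

/-- The double spider `DS(L, Pᶜᵒʳᵉ, R)`: the core path `v_l = 0 — 1 — ⋯ — s = v_r`,
together with, for each entry `ℓ` of `L` (resp. of `R`), a leg which is a path of
length `ℓ` attached at `v_l` (resp. at `v_r`). -/
def DoubleSpider (s : ℕ) (L R : List ℕ) : SimpleGraph (DSVert s L R) :=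
  SimpleGraph.fromRel fun x y =>
    match x, y with
    | Sum.inl a, Sum.inl b => (b : ℕ) = (a : ℕ) + 1
    | Sum.inl a, Sum.inr (Sum.inl p) => (a : ℕ) = 0 ∧ (p.2 : ℕ) = 0
    | Sum.inl a, Sum.inr (Sum.inr p) => (a : ℕ) = s ∧ (p.2 : ℕ) = 0
    | Sum.inr (Sum.inl p), Sum.inr (Sum.inl q) => p.1 = q.1 ∧ (q.2 : ℕ) = (p.2 : ℕ) + 1
    | Sum.inr (Sum.inr p), Sum.inr (Sum.inr q) => p.1 = q.1 ∧ (q.2 : ℕ) = (p.2 : ℕ) + 1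
    | _, _ => False

/-- The branch vertex `v_l` of a double spider. -/
def vL (s : ℕ) (L R : List ℕ) : DSVert s L R := Sum.inl 0

/-- The branch vertex `v_r` of a double spider. -/
def vR (s : ℕ) (L R : List ℕ) : DSVert s L R := Sum.inl (Fin.last s)


/-- Sum at the left branch vertex. -/
def phiL (n : Fin 5 → ℕ) (g : Fin 5 → ℕ → ℕ) : ℕ := g 0 (n 0 - 1) + g 1 (n 1 - 1) + g 4 0
/-- Sum at the right branch vertex. -/
def phiR (n : Fin 5 → ℕ) (g : Fin 5 → ℕ → ℕ) : ℕ := g 2 (n 2 - 1) + g 3 (n 3 - 1) + g 4 (n 4 - 1)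

/-- Numerical form of a strongly antimagic labeling. Paths `0, 1` are the left legs,
`2, 3` the right legs (both read from the leaf), `4` is the core (read from the left). -/
structure Good (n : Fin 5 → ℕ) (g : Fin 5 → ℕ → ℕ) : Prop where
  pos : ∀ i, 1 ≤ n i
  range : ∀ i j, j < n i → 1 ≤ g i j ∧ g i j ≤ n 0 + n 1 + n 2 + n 3 + n 4
  inj : ∀ i j i' j', j < n i → j' < n i' → g i j = g i' j' → i = i' ∧ j = j'
  sinj : ∀ i j i' j', j + 1 < n i → j' + 1 < n i' →
    g i j + g i (j + 1) = g i' j' + g i' (j' + 1) → i = i' ∧ j = j'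
  leaf : ∀ k i j, k ≠ 4 → j + 1 < n i → g k 0 < g i j + g i (j + 1)
  leafphi : ∀ k, k ≠ 4 → g k 0 < phiL n g ∧ g k 0 < phiR n g
  sphi : ∀ i j, j + 1 < n i → g i j + g i (j + 1) < phiL n g ∧ g i j + g i (j + 1) < phiR n g
  ne : phiL n g ≠ phiR n g

theorem Good.ext1 {n : Fin 5 → ℕ} {g : Fin 5 → ℕ → ℕ} (h : Good n g) (i : Fin 5) (hi : i ≠ 4)
    (hmax : ∀ k, k ≠ 4 → g k 0 ≤ g i 0) :
    Good (fun k => if k = i then n k + 1 else n k)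
      (fun k j => if k = i then (if j = 0 then 1 else g k (j - 1) + 1) else g k j + 1) := by
  have hp := h.pos
  have hsum : (∀ f : Fin 5 → ℕ, (∀ k, f k = if k = i then n k + 1 else n k) →
      f 0 + f 1 + f 2 + f 3 + f 4 = n 0 + n 1 + n 2 + n 3 + n 4 + 1) := by
    intro f hf
    rw [hf 0, hf 1, hf 2, hf 3, hf 4]
    fin_cases i <;> simp <;> omega
  have hlast : ∀ k, (if k = i then (if (if k = i then n k + 1 else n k) - 1 = 0 then 1 else
      g k ((if k = i then n k + 1 else n k) - 1 - 1) + 1) else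
      g k ((if k = i then n k + 1 else n k) - 1) + 1) = g k (n k - 1) + 1 := by
    intro k
    have := hp k
    by_cases hk : k = i
    · simp only [hk, if_true]
      rw [if_neg (by subst hk; omega)]; simp
    · simp [hk]
  have hL : phiL (fun k => if k = i then n k + 1 else n k)
      (fun k j => if k = i then (if j = 0 then 1 else g k (j - 1) + 1) else g k j + 1) =
      phiL n g + 3 := by
    unfold phiL
    beta_reduce
    rw [hlast 0, hlast 1, if_neg (Ne.symm hi)]; omega
  have hR : phiR (fun k => if k = i then n k + 1 else n k)
      (fun k j => if k = i then (if j = 0 then 1 else g k (j - 1) + 1) else g k j + 1) =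
      phiR n g + 3 := by
    unfold phiR
    beta_reduce
    rw [hlast 2, hlast 3, hlast 4]; omega
  -- description of consecutive sums
  have hs : ∀ k j, j + 1 < (if k = i then n k + 1 else n k) →
      (k = i ∧ j = 0 ∧ (if k = i then (if j = 0 then 1 else g k (j - 1) + 1) else g k j + 1) +
        (if k = i then (if j + 1 = 0 then 1 else g k (j + 1 - 1) + 1) else g k (j + 1) + 1)
          = g i 0 + 2) ∨
      (∃ j', j' + 1 < n k ∧ (k = i ∧ j = j' + 1 ∨ k ≠ i ∧ j = j') ∧
        (if k = i then (if j = 0 then 1 else g k (j - 1) + 1) else g k j + 1) +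
        (if k = i then (if j + 1 = 0 then 1 else g k (j + 1 - 1) + 1) else g k (j + 1) + 1)
          = g k j' + g k (j' + 1) + 2) := by
    intro k j hj
    by_cases hk : k = i
    · subst hk
      simp only [if_true] at hj ⊢
      rcases j with _ | j
      · left; simp; omega
      · right
        refine ⟨j, by omega, by simp, ?_⟩
        simp; omega
    · simp only [hk, if_false] at hj ⊢
      right
      exact ⟨j, hj, by simp [hk], by omega⟩
  refine ⟨?_, ?_, ?_, ?_, ?_, ?_, ?_, ?_⟩
  · intro k; have := hp k; split_ifs <;> omega
  · intro k j hj
    beta_reduce at hj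
    rw [hsum _ (fun _ => rfl)]
    by_cases hk : k = i
    · simp only [hk, if_true] at hj ⊢
      rcases j with _ | j
      · simp
      · have := h.range i j (by omega)
        simp; omega
    · simp only [hk, if_false] at hj ⊢
      have := h.range k j hj
      omega
  · intro k j k' j' hj hj' he
    beta_reduce at hj hj' he
    have key : ∀ k j, j < (if k = i then n k + 1 else n k) → 
        (k = i ∧ j = 0 ∧ (if k = i then (if j = 0 then 1 else g k (j - 1) + 1) else g k j + 1) = 1) ∨
        ∃ q, q < n k ∧ (k = i ∧ j = q + 1 ∨ k ≠ i ∧ j = q) ∧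
          (if k = i then (if j = 0 then 1 else g k (j - 1) + 1) else g k j + 1) = g k q + 1 := by
      intro k j hj
      by_cases hk : k = i
      · subst hk
        simp only [if_true] at hj ⊢
        rcases j with _ | j
        · left; simp
        · right
          exact ⟨j, by omega, by simp, by simp⟩
      · simp only [hk, if_false] at hj ⊢
        right
        exact ⟨j, hj, by simp [hk], by omega⟩
    rcases key k j hj with ⟨a1, a2, a3⟩ | ⟨q, a1, a2, a3⟩ <;>
      rcases key k' j' hj' with ⟨b1, b2, b3⟩ | ⟨q', b1, b2, b3⟩ <;> rw [a3, b3] at he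
    · exact ⟨by rw [a1, b1], by omega⟩
    · have := h.range _ _ b1; omega
    · have := h.range _ _ a1; omega
    · obtain ⟨rfl, rfl⟩ := h.inj _ _ _ _ a1 b1 (by omega)
      refine ⟨rfl, ?_⟩
      rcases a2 with a2 | a2 <;> rcases b2 with b2 | b2 <;> omega
  · intro k j k' j' hj hj' he
    beta_reduce at hj hj' he
    rcases hs k j hj with ⟨a1, a2, a3⟩ | ⟨q, a1, a2, a3⟩ <;>
      rcases hs k' j' hj' with ⟨b1, b2, b3⟩ | ⟨q', b1, b2, b3⟩ <;> rw [a3, b3] at he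
    · exact ⟨by rw [a1, b1], by omega⟩
    · have := h.leaf i _ _ hi b1; omega
    · have := h.leaf i _ _ hi a1; omega
    · obtain ⟨rfl, rfl⟩ := h.sinj _ _ _ _ a1 b1 (by omega)
      refine ⟨rfl, ?_⟩
      rcases a2 with a2 | a2 <;> rcases b2 with b2 | b2 <;> omega
  · intro k k' j hk hj
    beta_reduce at hj ⊢
    have h1 : (if k = i then (if 0 = 0 then 1 else g k (0 - 1) + 1) else g k 0 + 1) ≤ g i 0 + 1 := by
      have := hmax k hk
      split_ifs <;> omega
    rcases hs k' j hj with ⟨a1, a2, a3⟩ | ⟨q, a1, a2, a3⟩ <;> rw [a3]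
    · exact lt_of_le_of_lt h1 (by omega)
    · have := h.leaf i _ _ hi a1
      exact lt_of_le_of_lt h1 (by omega)
  · intro k hk
    beta_reduce
    rw [hL, hR]
    have h2 := h.leafphi k hk
    split_ifs <;> omega
  · intro k j hj
    beta_reduce at hj ⊢
    rw [hL, hR]
    rcases hs k j hj with ⟨a1, a2, a3⟩ | ⟨q, a1, a2, a3⟩ <;> rw [a3]
    · have := h.leafphi i hi; omega
    · have := h.sphi _ _ a1; omega
  · rw [hL, hR]; have := h.ne; omega

theorem Good.extSet (T : Finset (Fin 5)) : ∀ (n : Fin 5 → ℕ) (g : Fin 5 → ℕ → ℕ), 4 ∉ T →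
    Good n g → (∀ k, k ≠ 4 → k ∉ T → ∀ i ∈ T, g k 0 ≤ g i 0) →
    ∃ g', Good (fun k => if k ∈ T then n k + 1 else n k) g' := by
  induction hc : T.card generalizing T with
  | zero =>
    intro n g _ h _
    rw [Finset.card_eq_zero] at hc
    subst hc
    exact ⟨g, by simpa using h⟩
  | succ c ih =>
    intro n g h4 h hmin
    have hne : T.Nonempty := by rw [← Finset.card_pos]; omega
    obtain ⟨i, hiT, him⟩ := T.exists_max_image (fun i => g i 0) hne
    have hi : i ≠ 4 := by rintro rfl; exact h4 hiT
    have hmax : ∀ k, k ≠ 4 → g k 0 ≤ g i 0 := by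
      intro k hk
      by_cases hkT : k ∈ T
      · exact him k hkT
      · exact hmin k hk hkT i hiT
    obtain ⟨g', hg'⟩ := ih (T.erase i) (by rw [Finset.card_erase_of_mem hiT]; omega) _ _
      (by simp [h4]) (h.ext1 i hi hmax) (by
        intro k hk hkT j hj
        have hj1 := Finset.ne_of_mem_erase hj
        have hj2 := Finset.mem_of_mem_erase hj
        beta_reduce
        rw [if_neg hj1]
        by_cases hki : k = i
        · simp [hki]
        · rw [if_neg hki]
          have := hmin k hk (fun hh => hkT (Finset.mem_erase.2 ⟨hki, hh⟩)) j hj2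
          omega)
    refine ⟨g', ?_⟩
    convert hg' using 2 with k
    by_cases hki : k = i
    · subst hki; simp [hiT]
    · simp [hki]

theorem Good.perm {n : Fin 5 → ℕ} {g : Fin 5 → ℕ → ℕ} (h : Good n g) (σ : Equiv.Perm (Fin 5))
    (hσ : σ 4 = 4)
    (hs : n (σ 0) + n (σ 1) + n (σ 2) + n (σ 3) + n (σ 4) = n 0 + n 1 + n 2 + n 3 + n 4)
    (hL : phiL (fun k => n (σ k)) (fun k => g (σ k)) = phiL n g)
    (hR : phiR (fun k => n (σ k)) (fun k => g (σ k)) = phiR n g) :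
    Good (fun k => n (σ k)) (fun k => g (σ k)) := by
  have h4 : ∀ k, k ≠ 4 → σ k ≠ 4 := fun k hk h' => hk (σ.injective (by rw [h', hσ]))
  refine ⟨fun i => h.pos _, ?_, ?_, ?_, ?_, ?_, ?_, ?_⟩
  · intro i j hj
    have := h.range _ _ hj
    beta_reduce
    omega
  · intro i j i' j' hj hj' he
    obtain ⟨h1, h2⟩ := h.inj _ _ _ _ hj hj' he
    exact ⟨σ.injective h1, h2⟩
  · intro i j i' j' hj hj' he
    obtain ⟨h1, h2⟩ := h.sinj _ _ _ _ hj hj' he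
    exact ⟨σ.injective h1, h2⟩
  · intro k i j hk hj
    exact h.leaf _ _ _ (h4 k hk) hj
  · intro k hk
    rw [hL, hR]; exact h.leafphi _ (h4 k hk)
  · intro k j hj
    rw [hL, hR]; exact h.sphi _ _ hj
  · rw [hL, hR]; exact h.ne

/-- Reading the core from the other end together with exchanging the sides. -/
theorem Good.mirror {n : Fin 5 → ℕ} {g : Fin 5 → ℕ → ℕ} (h : Good n g) :
    ∃ g', Good ![n 2, n 3, n 0, n 1, n 4] g' := by
  have hp := h.pos 4
  have key : Good ![n 2, n 3, n 0, n 1, n 4]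
      ![g 2, g 3, g 0, g 1, fun j => g 4 (n 4 - 1 - j)] := by
    set σ : Fin 5 → Fin 5 := ![2, 3, 0, 1, 4] with hσd
    have hσ : Function.Injective σ := by decide
    set n' : Fin 5 → ℕ := ![n 2, n 3, n 0, n 1, n 4] with hn'
    set g' : Fin 5 → ℕ → ℕ := ![g 2, g 3, g 0, g 1, fun j => g 4 (n 4 - 1 - j)] with hg'
    have e1 : ∀ k, n' k = n (σ k) := by intro k; fin_cases k <;> rfl
    have e2 : ∀ k, k ≠ 4 → g' k = g (σ k) ∧ σ k ≠ 4 := by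
      intro k hk; fin_cases k <;> first | exact absurd rfl hk | exact ⟨rfl, by decide⟩
    have e3 : ∀ j, g' 4 j = g 4 (n 4 - 1 - j) := fun j => rfl
    have e4 : σ 4 = 4 := rfl
    have eL : phiL n' g' = phiR n g := by
      unfold phiL phiR; simp [hn', hg']
    have eR : phiR n' g' = phiL n g := by
      unfold phiL phiR; simp [hn', hg']
    have d1 : ∀ k j, j < n' k → ∃ q, q < n (σ k) ∧ g' k j = g (σ k) q ∧
        (k ≠ 4 ∧ q = j ∨ k = 4 ∧ q + j + 1 = n 4) := by
      intro k j hj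
      rw [e1] at hj
      by_cases hk : k = 4
      · subst hk
        rw [e4] at hj ⊢
        exact ⟨n 4 - 1 - j, by omega, e3 j, Or.inr ⟨rfl, by omega⟩⟩
      · exact ⟨j, hj, by rw [(e2 k hk).1], Or.inl ⟨hk, rfl⟩⟩
    have d2 : ∀ k j, j + 1 < n' k → ∃ q, q + 1 < n (σ k) ∧
        g' k j + g' k (j + 1) = g (σ k) q + g (σ k) (q + 1) ∧
        (k ≠ 4 ∧ q = j ∨ k = 4 ∧ q + j + 2 = n 4) := by
      intro k j hj
      rw [e1] at hj
      by_cases hk : k = 4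
      · subst hk
        rw [e4] at hj ⊢
        refine ⟨n 4 - 2 - j, by omega, ?_, Or.inr ⟨rfl, by omega⟩⟩
        rw [e3, e3, show n 4 - 1 - j = n 4 - 2 - j + 1 by omega,
          show n 4 - 1 - (j + 1) = n 4 - 2 - j by omega, add_comm]
      · exact ⟨j, hj, by rw [(e2 k hk).1], Or.inl ⟨hk, rfl⟩⟩
    refine ⟨?_, ?_, ?_, ?_, ?_, ?_, ?_, ?_⟩
    · intro i; rw [e1]; exact h.pos _
    · intro i j hj
      obtain ⟨q, hq, he, -⟩ := d1 i j hj
      have := h.range _ _ hq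
      rw [he, e1, e1, e1, e1, e1]
      simp only [hσd, Matrix.cons_val]
      simp only [hσd] at this
      omega
    · intro i j i' j' hj hj' he
      obtain ⟨q, hq, e, c⟩ := d1 i j hj
      obtain ⟨q', hq', e', c'⟩ := d1 i' j' hj'
      rw [e, e'] at he
      obtain ⟨h1, h2⟩ := h.inj _ _ _ _ hq hq' he
      have h1 := hσ h1
      subst h1
      exact ⟨rfl, by omega⟩
    · intro i j i' j' hj hj' he
      obtain ⟨q, hq, e, c⟩ := d2 i j hj
      obtain ⟨q', hq', e', c'⟩ := d2 i' j' hj'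
      rw [e, e'] at he
      obtain ⟨h1, h2⟩ := h.sinj _ _ _ _ hq hq' he
      have h1 := hσ h1
      subst h1
      exact ⟨rfl, by omega⟩
    · intro k i j hk hj
      obtain ⟨q, hq, e, -⟩ := d2 i j hj
      rw [e, (e2 k hk).1]
      exact h.leaf _ _ _ (e2 k hk).2 hq
    · intro k hk
      rw [eL, eR, (e2 k hk).1]
      exact (h.leafphi _ (e2 k hk).2).symm
    · intro k j hj
      obtain ⟨q, hq, e, -⟩ := d2 k j hj
      rw [eL, eR, e]
      exact (h.sphi _ _ hq).symm
    · rw [eL, eR]; exact h.ne.symm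
  exact ⟨_, key⟩

/-- Existence of a good labeling with the given lengths. -/
def Ex (a1 a2 b1 b2 s : ℕ) : Prop := ∃ g, Good ![a1, a2, b1, b2, s] g

theorem Ex.mirror {a1 a2 b1 b2 s : ℕ} (h : Ex a1 a2 b1 b2 s) : Ex b1 b2 a1 a2 s := by
  obtain ⟨g, hg⟩ := h
  exact hg.mirror

theorem Ex.swapA {a1 a2 b1 b2 s : ℕ} (h : Ex a1 a2 b1 b2 s) : Ex a2 a1 b1 b2 s := by
  obtain ⟨g, hg⟩ := h
  have := hg.perm (Equiv.swap 0 1) (by decide)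
    (by simp [Equiv.swap_apply_def]; omega)
    (by unfold phiL; simp [Equiv.swap_apply_def]; omega)
    (by unfold phiR; simp [Equiv.swap_apply_def])
  have e : (fun k => ![a1, a2, b1, b2, s] ((Equiv.swap 0 1) k)) = ![a2, a1, b1, b2, s] := by
    funext k
    fin_cases k <;> simp [Equiv.swap_apply_def]
  rw [e] at this
  exact ⟨_, this⟩

theorem Ex.swapB {a1 a2 b1 b2 s : ℕ} (h : Ex a1 a2 b1 b2 s) : Ex a1 a2 b2 b1 s :=
  h.mirror.swapA.mirror

/-- Alternating labels: along block `i` the labels alternate between the low ones, starting at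
`lo i`, and the high ones, starting at `hi i`. The bit `b i` tells whether the block starts
with a low (`0`) or a high (`1`) label. In the core the low labels skip one value at `gap`. -/
def alt (b lo hi : Fin 5 → ℕ) (gap : ℕ) (i : Fin 5) (j : ℕ) : ℕ :=
  if (j + b i) % 2 = 0 then lo i + j / 2 + (if i = 4 ∧ gap ≤ j then 1 else 0) else hi i + j / 2

theorem assembly (n b lo hi lt ht : Fin 5 → ℕ) (gap p : ℕ) (x : Fin 5)
    (hn : ∀ i, 1 ≤ n i) (hb : ∀ i, b i ≤ 1)
    (hlt : ∀ i, lo i + (n i + 1 - b i) / 2 ≤ lt i)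
    (hlt4 : gap < n 4 → lo 4 + (n 4 + 1 - b 4) / 2 + 1 ≤ lt 4)
    (hht : ∀ i, hi i + (n i + b i) / 2 ≤ ht i)
    (hrange : ∀ i, 1 ≤ lo i ∧ lt i ≤ p + 1 ∧ p + 1 ≤ hi i ∧
      ht i ≤ n 0 + n 1 + n 2 + n 3 + n 4 + 1)
    (hdl : ∀ i j, i < j → lt i ≤ lo j ∨ lt j ≤ lo i ∨
      (i = x ∧ j = 4 ∧ n x = 1 ∧ b x = 0 ∧ (gap + b 4) % 2 = 0 ∧ lo x = lo 4 + gap / 2))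
    (hdh : ∀ i j, i < j → ht i ≤ hi j ∨ ht j ≤ hi i)
    (hds : ∀ i j, i < j → 2 ≤ n i → 2 ≤ n j → (lt i ≤ lo j ∧ ht i ≤ hi j) ∨
      (lt j ≤ lo i ∧ ht j ≤ hi i))
    (hleaf : ∀ i, i ≠ 4 → b i = 0 ∨ hi i = p + 1)
    (hphi : p + 1 < phiL n (alt b lo hi gap) ∧ p + 1 < phiR n (alt b lo hi gap))
    (htop : ∀ i, 2 ≤ n i → lt i + ht i < phiL n (alt b lo hi gap) + 2 ∧
      lt i + ht i < phiR n (alt b lo hi gap) + 2)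
    (hne : phiL n (alt b lo hi gap) ≠ phiR n (alt b lo hi gap)) :
    Good n (alt b lo hi gap) := by
  -- values
  have hv : ∀ i j, j < n i →
      ((j + b i) % 2 = 0 ∧ ∃ ε, alt b lo hi gap i j = lo i + j / 2 + ε ∧
        (i = 4 ∧ gap ≤ j ∧ ε = 1 ∨ (i ≠ 4 ∨ j < gap) ∧ ε = 0) ∧
        lo i ≤ lo i + j / 2 + ε ∧ lo i + j / 2 + ε < lt i) ∨
      ((j + b i) % 2 = 1 ∧ alt b lo hi gap i j = hi i + j / 2 ∧ hi i + j / 2 < ht i) := by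
    intro i j hj
    have h1 := hlt i
    have h2 := hht i
    have h3 := hb i
    unfold alt
    by_cases hc : (j + b i) % 2 = 0
    · left
      refine ⟨hc, ?_⟩
      rw [if_pos hc]
      by_cases hg : i = 4 ∧ gap ≤ j
      · obtain ⟨rfl, hg⟩ := hg
        have := hlt4 (by omega)
        exact ⟨1, by simp [hg], by simp [hg], by omega, by omega⟩
      · refine ⟨0, by rw [if_neg hg], Or.inr ⟨?_, rfl⟩, by omega, by omega⟩
        by_cases hi4 : i = 4
        · right; by_contra hh; exact hg ⟨hi4, by omega⟩
        · exact Or.inl hi4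
    · right
      refine ⟨by omega, by rw [if_neg hc], by omega⟩
  -- sums
  have hsv : ∀ i j, j + 1 < n i → ∃ ε,
      alt b lo hi gap i j + alt b lo hi gap i (j + 1) = lo i + hi i + j + ε ∧
      (i = 4 ∧ (gap ≤ j ∧ ε = 1 ∨ gap = j + 1 ∧ ε ≤ 1 ∨ j + 1 < gap ∧ ε = 0) ∨
        i ≠ 4 ∧ ε = 0) ∧ lo i + hi i + j + ε + 2 ≤ lt i + ht i := by
    intro i j hj
    have h3 := hb i
    rcases hv i j (by omega) with ⟨a1, ε, a2, a3, a4, a5⟩ | ⟨a1, a2, a3⟩ <;>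
      rcases hv i (j + 1) hj with ⟨c1, ε', c2, c3, c4, c5⟩ | ⟨c1, c2, c3⟩
    · omega
    · refine ⟨ε, by rw [a2, c2]; omega, ?_, by omega⟩
      by_cases h4 : i = 4 <;> simp [h4] at a3 ⊢ <;> omega
    · refine ⟨ε', by rw [a2, c2]; omega, ?_, by omega⟩
      by_cases h4 : i = 4 <;> simp [h4] at c3 ⊢ <;> omega
    · omega
  have hvlt : ∀ i j i' j', i < i' → j < n i → j' < n i' →
      alt b lo hi gap i j ≠ alt b lo hi gap i' j' := by
    intro i j i' j' hii hj hj' he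
    have r1 := hrange i
    have r2 := hrange i'
    have r3 := hdl i i' hii
    have r4 := hdh i i' hii
    rcases hv i j hj with ⟨a1, ε, a2, a3, a4, a5⟩ | ⟨a1, a2, a3⟩ <;>
      rcases hv i' j' hj' with ⟨c1, ε', c2, c3, c4, c5⟩ | ⟨c1, c2, c3⟩ <;> rw [a2, c2] at he
    · rcases r3 with r3 | r3 | ⟨rfl, rfl, q1, q2, q3, q4⟩
      · omega
      · omega
      · have : i ≠ 4 := ne_of_lt hii
        simp [this] at a3 c3
        have := hb 4
        omega
    · omega
    · omega
    · omega
  have hslt : ∀ i j i' j', i < i' → j + 1 < n i → j' + 1 < n i' →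
      alt b lo hi gap i j + alt b lo hi gap i (j + 1) ≠
      alt b lo hi gap i' j' + alt b lo hi gap i' (j' + 1) := by
    intro i j i' j' hii hj hj' he
    have r3 := hds i i' hii (by omega) (by omega)
    obtain ⟨ε, a1, -, a2⟩ := hsv i j hj
    obtain ⟨ε', c1, -, c2⟩ := hsv i' j' hj'
    omega
  have hlf : ∀ k, k ≠ 4 → alt b lo hi gap k 0 ≤ p + 1 := by
    intro k hk
    have r1 := hrange k
    have r2 := hleaf k hk
    rcases hv k 0 (hn k) with ⟨a1, ε, a2, a3, a4, a5⟩ | ⟨a1, a2, a3⟩ <;> rw [a2] <;> omega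
  refine ⟨hn, ?_, ?_, ?_, ?_, ?_, ?_, hne⟩
  · intro i j hj
    have r1 := hrange i
    have r2 := hht i
    rcases hv i j hj with ⟨a1, ε, a2, a3, a4, a5⟩ | ⟨a1, a2, a3⟩ <;> rw [a2] <;> omega
  · intro i j i' j' hj hj' he
    rcases lt_trichotomy i i' with hii | hii | hii
    · exact absurd he (hvlt i j i' j' hii hj hj')
    · subst hii
      refine ⟨rfl, ?_⟩
      have r1 := hrange i
      rcases hv i j hj with ⟨a1, ε, a2, a3, a4, a5⟩ | ⟨a1, a2, a3⟩ <;>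
        rcases hv i j' hj' with ⟨c1, ε', c2, c3, c4, c5⟩ | ⟨c1, c2, c3⟩ <;> rw [a2, c2] at he
      · by_cases h4 : i = 4 <;> simp [h4] at a3 c3 <;> omega
      · omega
      · omega
      · omega
    · exact absurd he.symm (hvlt i' j' i j hii hj' hj)
  · intro i j i' j' hj hj' he
    rcases lt_trichotomy i i' with hii | hii | hii
    · exact absurd he (hslt i j i' j' hii hj hj')
    · subst hii
      refine ⟨rfl, ?_⟩
      obtain ⟨ε, a1, a3, a2⟩ := hsv i j hj
      obtain ⟨ε', c1, c3, c2⟩ := hsv i j' hj'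
      rw [a1, c1] at he
      by_cases h4 : i = 4 <;> simp [h4] at a3 c3 <;> omega
    · exact absurd he.symm (hslt i' j' i j hii hj' hj)
  · intro k i j hk hj
    have := hlf k hk
    have r1 := hrange i
    obtain ⟨ε, a1, -, a2⟩ := hsv i j hj
    omega
  · intro k hk
    have := hlf k hk
    omega
  · intro i j hj
    obtain ⟨ε, a1, -, a2⟩ := hsv i j hj
    have := htop i (by omega)
    omega

/-- Sum of `c k` over the blocks `k` before rank `r`. -/
def before (r c : Fin 5 → ℕ) (i : Fin 5) : ℕ := ∑ k, if r k < r i then c k else 0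

theorem before_add_le (r c : Fin 5 → ℕ) (i j : Fin 5) (h : r i < r j) :
    before r c i + c i ≤ before r c j := by
  unfold before
  have : c i = ∑ k, if k = i then c k else 0 := by simp
  rw [this, ← Finset.sum_add_distrib]
  apply Finset.sum_le_sum
  intro k _
  by_cases hk : k = i
  · subst hk; simp [h]
  · simp only [hk, if_false]
    split_ifs <;> omega

theorem before_add_le_total (r c : Fin 5 → ℕ) (i : Fin 5) :
    before r c i + c i ≤ ∑ k, c k := by
  unfold before
  have : c i = ∑ k, if k = i then c k else 0 := by simp
  rw [this, ← Finset.sum_add_distrib]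
  apply Finset.sum_le_sum
  intro k _
  by_cases hk : k = i
  · subst hk; simp
  · simp only [hk, if_false]
    split_ifs <;> omega

/-- Block schemes: blocks in the order given by the ranks `r`. -/
theorem scheme (n b r : Fin 5 → ℕ) (hn : ∀ i, 1 ≤ n i) (hb : ∀ i, b i ≤ 1)
    (hr : Function.Injective r)
    (hleaf : ∀ i, i ≠ 4 → b i = 0 ∨ r i = 0)
    (H : ∀ (lo hi e : Fin 5 → ℕ) (p st : ℕ),
      (∀ i, lo i = before r (fun k => (n k + 1 - b k) / 2) i + 1) →
      p = ∑ k, (n k + 1 - b k) / 2 →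
      (∀ i, hi i = before r (fun k => (n k + b k) / 2) i + (p + 1)) →
      (∀ i, (n i - 1 + b i) % 2 = 0 ∧ e i = lo i + (n i - 1) / 2 ∨
        (n i - 1 + b i) % 2 = 1 ∧ e i = hi i + (n i - 1) / 2) →
      (b 4 = 0 ∧ st = lo 4 ∨ b 4 = 1 ∧ st = hi 4) →
      (p + 1 < e 0 + e 1 + st ∧ p + 1 < e 2 + e 3 + e 4) ∧
      e 0 + e 1 + st ≠ e 2 + e 3 + e 4 ∧
      ∀ i, 2 ≤ n i → lo i + hi i + n i < e 0 + e 1 + st + 2 ∧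
        lo i + hi i + n i < e 2 + e 3 + e 4 + 2) :
    ∃ lo hi : Fin 5 → ℕ, Good n (alt b lo hi (n 4)) ∧
      ∀ i, lo i = before r (fun k => (n k + 1 - b k) / 2) i + 1 := by
  set p := ∑ k, (n k + 1 - b k) / 2 with hp
  set lo : Fin 5 → ℕ := fun i => before r (fun k => (n k + 1 - b k) / 2) i + 1 with hlo
  set hi : Fin 5 → ℕ := fun i => before r (fun k => (n k + b k) / 2) i + (p + 1) with hhi
  refine ⟨lo, hi, ?_, fun i => rfl⟩
  have ha : ∀ i j, j < n i → alt b lo hi (n 4) i j =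
      if (j + b i) % 2 = 0 then lo i + j / 2 else hi i + j / 2 := by
    intro i j hj
    unfold alt
    rw [if_neg (c := i = 4 ∧ n 4 ≤ j)]
    · simp
    · rintro ⟨rfl, h⟩; omega
  have h4 := hb 4
  have hn4 := hn 4
  obtain ⟨h1, h2, h3⟩ := H lo hi (fun i => alt b lo hi (n 4) i (n i - 1)) p
    (alt b lo hi (n 4) 4 0) (fun i => rfl) rfl (fun i => rfl) (by
      intro i
      have := hn i
      beta_reduce
      rw [ha i _ (by omega)]
      split_ifs with hc
      · exact Or.inl ⟨hc, rfl⟩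
      · exact Or.inr ⟨by omega, rfl⟩) (by
      rw [ha 4 0 (by omega)]
      split_ifs with hc
      · left; omega
      · right; omega)
  have htot : p + ∑ k, (n k + b k) / 2 = n 0 + n 1 + n 2 + n 3 + n 4 := by
    rw [hp, Fin.sum_univ_five, Fin.sum_univ_five]
    have := hb 0; have := hb 1; have := hb 2; have := hb 3
    omega
  have o1 : ∀ i j, r i < r j → lo i + (n i + 1 - b i) / 2 ≤ lo j := by
    intro i j hij
    have := before_add_le r (fun k => (n k + 1 - b k) / 2) i j hij
    simp only [hlo]; omega
  have o2 : ∀ i j, r i < r j → hi i + (n i + b i) / 2 ≤ hi j := by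
    intro i j hij
    have := before_add_le r (fun k => (n k + b k) / 2) i j hij
    simp only [hhi]; omega
  have tri : ∀ i j, i < j → r i < r j ∨ r j < r i := by
    intro i j hij
    have : r i ≠ r j := fun h => (ne_of_lt hij) (hr h)
    omega
  refine assembly n b lo hi (fun i => lo i + (n i + 1 - b i) / 2)
    (fun i => hi i + (n i + b i) / 2) (n 4) p 0 hn hb (fun i => le_rfl) (fun h => by omega)
    (fun i => le_rfl) ?_ ?_ ?_ ?_ ?_ h1 ?_ h2
  · intro i
    have q1 := before_add_le_total r (fun k => (n k + 1 - b k) / 2) i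
    have q2 := before_add_le_total r (fun k => (n k + b k) / 2) i
    simp only [hlo, hhi]
    beta_reduce at q1 q2
    rw [← hp] at q1
    omega
  · intro i j hij
    rcases tri i j hij with h | h
    · exact Or.inl (o1 i j h)
    · exact Or.inr (Or.inl (o1 j i h))
  · intro i j hij
    rcases tri i j hij with h | h
    · exact Or.inl (o2 i j h)
    · exact Or.inr (o2 j i h)
  · intro i j hij _ _
    rcases tri i j hij with h | h
    · exact Or.inl ⟨o1 i j h, o2 i j h⟩
    · exact Or.inr ⟨o1 j i h, o2 j i h⟩
  · intro i hi4
    rcases hleaf i hi4 with h | h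
    · exact Or.inl h
    · right
      simp [hhi, before, h]
  · intro i hi2
    have q := h3 i hi2
    have := hb i
    have e : (n i + 1 - b i) / 2 + (n i + b i) / 2 = n i := by omega
    unfold phiL phiR
    beta_reduce at q ⊢
    omega

theorem scheme_ex (a1 a2 b1 b2 s : ℕ) (b r q : Fin 5 → ℕ)
    (hn : 1 ≤ a1 ∧ 1 ≤ a2 ∧ 1 ≤ b1 ∧ 1 ≤ b2 ∧ 1 ≤ s)
    (hd : (∀ i, b i ≤ 1) ∧ Function.Injective r ∧ ∀ i, i ≠ 4 → b i = 0 ∨ r i = 0)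
    (hq : ∀ i, (![a1, a2, b1, b2, s] i - 1 + b i) % 2 = q i)
    (H : ∀ (lo hi e : Fin 5 → ℕ) (p st : ℕ),
      (∀ i, lo i = before r (fun k => (![a1, a2, b1, b2, s] k + 1 - b k) / 2) i + 1) →
      p = ∑ k, (![a1, a2, b1, b2, s] k + 1 - b k) / 2 →
      (∀ i, hi i = before r (fun k => (![a1, a2, b1, b2, s] k + b k) / 2) i + (p + 1)) →
      (∀ i, e i = (if q i = 0 then lo i else hi i) + (![a1, a2, b1, b2, s] i - 1) / 2) →
      (st = if b 4 = 0 then lo 4 else hi 4) →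
      (p + 1 < e 0 + e 1 + st ∧ p + 1 < e 2 + e 3 + e 4) ∧
      e 0 + e 1 + st ≠ e 2 + e 3 + e 4 ∧
      ∀ i, 2 ≤ ![a1, a2, b1, b2, s] i →
        lo i + hi i + ![a1, a2, b1, b2, s] i < e 0 + e 1 + st + 2 ∧
        lo i + hi i + ![a1, a2, b1, b2, s] i < e 2 + e 3 + e 4 + 2) :
    ∃ lo hi : Fin 5 → ℕ, Good ![a1, a2, b1, b2, s] (alt b lo hi s) ∧
      ∀ i, lo i = before r (fun k => (![a1, a2, b1, b2, s] k + 1 - b k) / 2) i + 1 := by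
  refine scheme ![a1, a2, b1, b2, s] b r
    (by intro i; fin_cases i <;> simp <;> omega) hd.1 hd.2.1 hd.2.2 ?_
  intro lo hi e p st h1 h2 h3 h4 h5
  refine H lo hi e p st h1 h2 h3 ?_ ?_
  · intro i
    have := hq i
    rcases h4 i with ⟨h, h'⟩ | ⟨h, h'⟩
    · rw [if_pos (by omega), h']
    · rw [if_neg (by omega), h']
  · rcases h5 with ⟨h, h'⟩ | ⟨h, h'⟩
    · rw [if_pos (by omega), h']
    · rw [if_neg (by omega), h']


theorem half_simps (k : ℕ) : (2 * k + 1) / 2 = k ∧ (2 * k + 2) / 2 = k + 1 ∧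
    (2 * k + 3) / 2 = k + 1 ∧ (2 * k + 1) % 2 = 1 ∧ (2 * k + 2) % 2 = 0 ∧ (2 * k) % 2 = 0 := by
  omega

/- Block order: A1L B1L CH B2L A2L. -/
theorem case_eee_o (a b c s : ℕ) :
    Ex (2 * a + 2) 1 (2 * b + 2) (2 * c + 2) (2 * s + 1) := by
  obtain ⟨lo, hi, h, -⟩ := scheme_ex (2 * a + 2) 1 (2 * b + 2) (2 * c + 2) (2 * s + 1)
    ![0, 0, 0, 0, 1] ![0, 4, 1, 3, 2] ![1, 0, 1, 1, 1]
    (by omega) (by decide) (by simp [Fin.forall_fin_succ, half_simps]) (by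
      intro lo hi e p st hlo hp hhi he hst
      simp [Fin.forall_fin_succ, before, Fin.sum_univ_five, half_simps] at hlo hp hhi he hst ⊢
      repeat' first | apply And.intro | intro _
      all_goals omega)
  exact ⟨_, h⟩

/- Block order: A1L CH B1L B2L A2L. -/
theorem case_eeo_o (a b c s : ℕ) :
    Ex (2 * a + 2) 1 (2 * b + 2) (2 * c + 1) (2 * s + 1) := by
  obtain ⟨lo, hi, h, -⟩ := scheme_ex (2 * a + 2) 1 (2 * b + 2) (2 * c + 1) (2 * s + 1)
    ![0, 0, 0, 0, 1] ![0, 4, 2, 3, 1] ![1, 0, 1, 0, 1]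
    (by omega) (by decide) (by simp [Fin.forall_fin_succ, half_simps]) (by
      intro lo hi e p st hlo hp hhi he hst
      simp [Fin.forall_fin_succ, before, Fin.sum_univ_five, half_simps] at hlo hp hhi he hst ⊢
      repeat' first | apply And.intro | intro _
      all_goals omega)
  exact ⟨_, h⟩

/- Block order: B1H CH A1L B2L A2L. -/
theorem case_eoo_o (a b c s : ℕ) :
    Ex (2 * a + 2) 1 (2 * b + 1) (2 * c + 1) (2 * s + 1) := by
  obtain ⟨lo, hi, h, -⟩ := scheme_ex (2 * a + 2) 1 (2 * b + 1) (2 * c + 1) (2 * s + 1)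
    ![0, 0, 1, 0, 1] ![2, 4, 0, 3, 1] ![1, 0, 1, 0, 1]
    (by omega) (by decide) (by simp [Fin.forall_fin_succ, half_simps]) (by
      intro lo hi e p st hlo hp hhi he hst
      simp [Fin.forall_fin_succ, before, Fin.sum_univ_five, half_simps] at hlo hp hhi he hst ⊢
      repeat' first | apply And.intro | intro _
      all_goals omega)
  exact ⟨_, h⟩

/- Block order: A1H B1L CH B2L A2L. -/
theorem case_oee_o (a b c s : ℕ) :
    Ex (2 * a + 1) 1 (2 * b + 2) (2 * c + 2) (2 * s + 1) := by
  obtain ⟨lo, hi, h, -⟩ := scheme_ex (2 * a + 1) 1 (2 * b + 2) (2 * c + 2) (2 * s + 1)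
    ![1, 0, 0, 0, 1] ![0, 4, 1, 3, 2] ![1, 0, 1, 1, 1]
    (by omega) (by decide) (by simp [Fin.forall_fin_succ, half_simps]) (by
      intro lo hi e p st hlo hp hhi he hst
      simp [Fin.forall_fin_succ, before, Fin.sum_univ_five, half_simps] at hlo hp hhi he hst ⊢
      repeat' first | apply And.intro | intro _
      all_goals omega)
  exact ⟨_, h⟩

/- Block order: A1H CH B1L B2L A2L. -/
theorem case_oeo_o (a b c s : ℕ) :
    Ex (2 * a + 1) 1 (2 * b + 2) (2 * c + 1) (2 * s + 1) := by
  obtain ⟨lo, hi, h, -⟩ := scheme_ex (2 * a + 1) 1 (2 * b + 2) (2 * c + 1) (2 * s + 1)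
    ![1, 0, 0, 0, 1] ![0, 4, 2, 3, 1] ![1, 0, 1, 0, 1]
    (by omega) (by decide) (by simp [Fin.forall_fin_succ, half_simps]) (by
      intro lo hi e p st hlo hp hhi he hst
      simp [Fin.forall_fin_succ, before, Fin.sum_univ_five, half_simps] at hlo hp hhi he hst ⊢
      repeat' first | apply And.intro | intro _
      all_goals omega)
  exact ⟨_, h⟩

/- Block order: A1H B2L CH B1L A2L. -/
theorem case_ooo_o (a b c s : ℕ) (hbc : b ≤ c) :
    Ex (2 * a + 1) 1 (2 * b + 1) (2 * c + 1) (2 * s + 1) := by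
  obtain ⟨lo, hi, h, -⟩ := scheme_ex (2 * a + 1) 1 (2 * b + 1) (2 * c + 1) (2 * s + 1)
    ![1, 0, 0, 0, 1] ![0, 4, 3, 1, 2] ![1, 0, 0, 0, 1]
    (by omega) (by decide) (by simp [Fin.forall_fin_succ, half_simps]) (by
      intro lo hi e p st hlo hp hhi he hst
      simp [Fin.forall_fin_succ, before, Fin.sum_univ_five, half_simps] at hlo hp hhi he hst ⊢
      repeat' first | apply And.intro | intro _
      all_goals omega)
  exact ⟨_, h⟩

/- Block order: A1L CH B1L B2L A2L. -/
theorem case_eee_e (a b c s : ℕ) :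
    Ex (2 * a + 2) 1 (2 * b + 2) (2 * c + 2) (2 * s + 2) := by
  obtain ⟨lo, hi, h, -⟩ := scheme_ex (2 * a + 2) 1 (2 * b + 2) (2 * c + 2) (2 * s + 2)
    ![0, 0, 0, 0, 1] ![0, 4, 2, 3, 1] ![1, 0, 1, 1, 0]
    (by omega) (by decide) (by simp [Fin.forall_fin_succ, half_simps]) (by
      intro lo hi e p st hlo hp hhi he hst
      simp [Fin.forall_fin_succ, before, Fin.sum_univ_five, half_simps] at hlo hp hhi he hst ⊢
      repeat' first | apply And.intro | intro _
      all_goals omega)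
  exact ⟨_, h⟩

/- Block order: B2H A1L B1L CH A2L. -/
theorem case_eeo_e (a b c s : ℕ) :
    Ex (2 * a + 2) 1 (2 * b + 2) (2 * c + 1) (2 * s + 2) := by
  obtain ⟨lo, hi, h, -⟩ := scheme_ex (2 * a + 2) 1 (2 * b + 2) (2 * c + 1) (2 * s + 2)
    ![0, 0, 0, 1, 1] ![1, 4, 2, 0, 3] ![1, 0, 1, 1, 0]
    (by omega) (by decide) (by simp [Fin.forall_fin_succ, half_simps]) (by
      intro lo hi e p st hlo hp hhi he hst
      simp [Fin.forall_fin_succ, before, Fin.sum_univ_five, half_simps] at hlo hp hhi he hst ⊢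
      repeat' first | apply And.intro | intro _
      all_goals omega)
  exact ⟨_, h⟩

/- Block order: A1H CH B1L B2L A2L. -/
theorem case_oee_e (a b c s : ℕ) :
    Ex (2 * a + 1) 1 (2 * b + 2) (2 * c + 2) (2 * s + 2) := by
  obtain ⟨lo, hi, h, -⟩ := scheme_ex (2 * a + 1) 1 (2 * b + 2) (2 * c + 2) (2 * s + 2)
    ![1, 0, 0, 0, 1] ![0, 4, 2, 3, 1] ![1, 0, 1, 1, 0]
    (by omega) (by decide) (by simp [Fin.forall_fin_succ, half_simps]) (by
      intro lo hi e p st hlo hp hhi he hst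
      simp [Fin.forall_fin_succ, before, Fin.sum_univ_five, half_simps] at hlo hp hhi he hst ⊢
      repeat' first | apply And.intro | intro _
      all_goals omega)
  exact ⟨_, h⟩

/- Block order: B1H CL A1L B2L A2L. -/
theorem case_eoo_e (a b c s : ℕ) (hbc : c ≤ b) :
    Ex (2 * a + 2) 1 (2 * b + 1) (2 * c + 1) (2 * s + 2) := by
  obtain ⟨lo, hi, h, -⟩ := scheme_ex (2 * a + 2) 1 (2 * b + 1) (2 * c + 1) (2 * s + 2)
    ![0, 0, 1, 0, 0] ![2, 4, 0, 3, 1] ![1, 0, 1, 0, 1]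
    (by omega) (by decide) (by simp [Fin.forall_fin_succ, half_simps]) (by
      intro lo hi e p st hlo hp hhi he hst
      simp [Fin.forall_fin_succ, before, Fin.sum_univ_five, half_simps] at hlo hp hhi he hst ⊢
      repeat' first | apply And.intro | intro _
      all_goals omega)
  exact ⟨_, h⟩

/- Block order: A1H B1L CH B2L A2L. -/
theorem case_oeo_e1 (a b c s : ℕ) (hac : c ≤ a) :
    Ex (2 * a + 1) 1 (2 * b + 2) (2 * c + 1) (2 * s + 2) := by
  obtain ⟨lo, hi, h, -⟩ := scheme_ex (2 * a + 1) 1 (2 * b + 2) (2 * c + 1) (2 * s + 2)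
    ![1, 0, 0, 0, 1] ![0, 4, 1, 3, 2] ![1, 0, 1, 0, 0]
    (by omega) (by decide) (by simp [Fin.forall_fin_succ, half_simps]) (by
      intro lo hi e p st hlo hp hhi he hst
      simp [Fin.forall_fin_succ, before, Fin.sum_univ_five, half_simps] at hlo hp hhi he hst ⊢
      repeat' first | apply And.intro | intro _
      all_goals omega)
  exact ⟨_, h⟩

/- Block order: B2H CH B1L A1L A2L. -/
theorem case_oeo_e2 (a b c s : ℕ) (hac : a < c) :
    Ex (2 * a + 1) 1 (2 * b + 2) (2 * c + 1) (2 * s + 2) := by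
  obtain ⟨lo, hi, h, -⟩ := scheme_ex (2 * a + 1) 1 (2 * b + 2) (2 * c + 1) (2 * s + 2)
    ![0, 0, 0, 1, 1] ![3, 4, 2, 0, 1] ![0, 0, 1, 1, 0]
    (by omega) (by decide) (by simp [Fin.forall_fin_succ, half_simps]) (by
      intro lo hi e p st hlo hp hhi he hst
      simp [Fin.forall_fin_succ, before, Fin.sum_univ_five, half_simps] at hlo hp hhi he hst ⊢
      repeat' first | apply And.intro | intro _
      all_goals omega)
  exact ⟨_, h⟩

/- Block order: B1H CH A2L A1L B2L. -/
theorem case_o1o_e (a c s : ℕ) (hac : c ≤ a) :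
    Ex 1 (2 * c + 1) (2 * a + 1) 1 (2 * s + 2) := by
  obtain ⟨lo, hi, h, -⟩ := scheme_ex 1 (2 * c + 1) (2 * a + 1) 1 (2 * s + 2)
    ![0, 0, 1, 0, 1] ![3, 2, 0, 4, 1] ![0, 0, 1, 0, 0]
    (by omega) (by decide) (by simp [Fin.forall_fin_succ, half_simps]) (by
      intro lo hi e p st hlo hp hhi he hst
      simp [Fin.forall_fin_succ, before, Fin.sum_univ_five, half_simps] at hlo hp hhi he hst ⊢
      repeat' first | apply And.intro | intro _
      all_goals omega)
  exact ⟨_, h⟩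

/- Block order: B2L A1L B1L CL A2L. -/
theorem case_lift (a b c s : ℕ) (hbc : c ≤ b) :
    Ex (2 * b + 2 + 1) (2 * c + 2 + 1) (2 * a + 2 + 1) 1 (2 * s + 2) := by
  obtain ⟨lo, hi, h, h'⟩ := scheme_ex (2 * b + 2) (2 * c + 2) (2 * a + 2) 1 (2 * s + 2)
    ![0, 0, 0, 0, 0] ![1, 4, 2, 0, 3] ![1, 1, 1, 0, 1]
    (by omega) (by decide) (by simp [Fin.forall_fin_succ, half_simps]) (by
      intro lo hi e p st hlo hp hhi he hst
      simp [Fin.forall_fin_succ, before, Fin.sum_univ_five, half_simps] at hlo hp hhi he hst ⊢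
      repeat' first | apply And.intro | intro _
      all_goals omega)
  simp [Fin.forall_fin_succ, before, Fin.sum_univ_five, half_simps] at h'
  obtain ⟨g, hg⟩ := h.extSet {0, 1, 2} _ _ (by decide) (by
    intro k hk hk' i hi'
    have hk3 : k = 3 := by revert hk hk'; revert k; decide
    subst hk3
    simp at hi'
    rcases hi' with rfl | rfl | rfl <;> simp [alt] <;> omega)
  have e : (fun k => if k ∈ ({0, 1, 2} : Finset (Fin 5)) then
      ![2 * b + 2, 2 * c + 2, 2 * a + 2, 1, 2 * s + 2] k + 1 else ![2 * b + 2, 2 * c + 2, 2 * a + 2, 1, 2 * s + 2] k) =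
      ![2 * b + 2 + 1, 2 * c + 2 + 1, 2 * a + 2 + 1, 1, 2 * s + 2] := by
    funext k
    fin_cases k <;> simp
  rw [e] at hg
  exact ⟨g, hg⟩

/- Block order: B1H CH B2L A1L, with the one-edge leg A2 placed just before the last low label
of the core. -/
theorem case_gap (b c s : ℕ) (hb : 1 ≤ b) (hc : 1 ≤ c) (hs : 1 ≤ s)
    (pb : b % 2 = 1) (pc : c % 2 = 1) (ps : s % 2 = 0) (hbc : c ≤ b) : Ex 1 1 b c s := by
  obtain ⟨b, rfl⟩ : ∃ k, b = 2 * k + 1 := ⟨b / 2, by omega⟩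
  obtain ⟨c, rfl⟩ : ∃ k, c = 2 * k + 1 := ⟨c / 2, by omega⟩
  obtain ⟨s, rfl⟩ : ∃ k, s = 2 * k + 2 := ⟨s / 2 - 1, by omega⟩
  have key : ∀ p, p = b + s + c + 4 →
      Good ![1, 1, 2 * b + 1, 2 * c + 1, 2 * s + 2] (alt ![0, 0, 1, 0, 1]
        ![p, b + 1 + s, 1, b + s + 3, b + 1]
        ![p + 2 + b + s + c + 1, p + 2 + b + s + c + 1, p + 1, p + b + s + 3, p + b + 2]
        (2 * s + 1)) := by
    intro p hp
    have d1 : (2 * s + 1) / 2 = s := by omega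
    have d2 : (2 * s + 1 + 1) % 2 = 0 := by omega
    have d3 : (2 * b + 1) % 2 = 1 := by omega
    have hL : phiL ![1, 1, 2 * b + 1, 2 * c + 1, 2 * s + 2] (alt ![0, 0, 1, 0, 1]
        ![p, b + 1 + s, 1, b + s + 3, b + 1]
        ![p + 2 + b + s + c + 1, p + 2 + b + s + c + 1, p + 1, p + b + s + 3, p + b + 2]
        (2 * s + 1)) = p + (b + 1 + s) + (p + b + 2) := by
      simp [phiL, alt]
    have hR : phiR ![1, 1, 2 * b + 1, 2 * c + 1, 2 * s + 2] (alt ![0, 0, 1, 0, 1]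
        ![p, b + 1 + s, 1, b + s + 3, b + 1]
        ![p + 2 + b + s + c + 1, p + 2 + b + s + c + 1, p + 1, p + b + s + 3, p + b + 2]
        (2 * s + 1)) = (p + 1 + b) + (b + s + 3 + c) + (b + 1 + s + 1) := by
      simp [phiR, alt, d1, d2, d3]
    refine assembly _ _ _ _ ![p + 1, b + 2 + s, b + 1, p, b + s + 3]
      ![p + 2 + b + s + c + 1, p + 2 + b + s + c + 1, p + b + 2, p + 2 + b + s + c + 1,
        p + b + s + 3] (2 * s + 1) p 1 ?_ ?_ ?_ ?_ ?_ ?_ ?_ ?_ ?_ ?_ ?_ ?_ ?_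
    · simp [Fin.forall_fin_succ]
    · decide
    · simp [Fin.forall_fin_succ]; omega
    · simp; omega
    · simp [Fin.forall_fin_succ]; omega
    · simp [Fin.forall_fin_succ]; omega
    · simp [Fin.forall_fin_succ]; omega
    · simp [Fin.forall_fin_succ]; omega
    · simp [Fin.forall_fin_succ]; omega
    · simp [Fin.forall_fin_succ]
    · rw [hL, hR]; omega
    · rw [hL, hR]; simp [Fin.forall_fin_succ]; omega
    · rw [hL, hR]; omega
  exact ⟨_, key _ rfl⟩

theorem even_or_odd_pos (a : ℕ) (ha : 1 ≤ a) : (∃ k, a = 2 * k + 2) ∨ ∃ k, a = 2 * k + 1 := by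
  rcases Nat.mod_two_eq_zero_or_one a with h | h
  · exact Or.inl ⟨a / 2 - 1, by omega⟩
  · exact Or.inr ⟨a / 2, by omega⟩

theorem ex_a2_one_aux (a b c s : ℕ) (ha : 1 ≤ a) (hb : 1 ≤ b) (hc : 1 ≤ c) (hs : 1 ≤ s)
    (hbc : b % 2 < c % 2 ∨ b % 2 = c % 2 ∧ c ≤ b) : Ex a 1 b c s := by
  rcases even_or_odd_pos a ha with ⟨a, rfl⟩ | ⟨a, rfl⟩ <;>
  rcases even_or_odd_pos b hb with ⟨b, rfl⟩ | ⟨b, rfl⟩ <;>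
  rcases even_or_odd_pos c hc with ⟨c, rfl⟩ | ⟨c, rfl⟩ <;>
  rcases even_or_odd_pos s hs with ⟨s, rfl⟩ | ⟨s, rfl⟩
  · exact case_eee_e a b c s
  · exact case_eee_o a b c s
  · exact case_eeo_e a b c s
  · exact case_eeo_o a b c s
  · omega
  · omega
  · exact case_eoo_e a b c s (by omega)
  · exact case_eoo_o a b c s
  · exact case_oee_e a b c s
  · exact case_oee_o a b c s
  · rcases Nat.lt_or_ge a c with h | h
    · exact case_oeo_e2 a b c s h
    · exact case_oeo_e1 a b c s h
  · exact case_oeo_o a b c s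
  · omega
  · omega
  · rcases a with _ | a
    · exact case_gap _ _ _ hb hc hs (by omega) (by omega) (by omega) (by omega)
    rcases c with _ | c
    · rcases Nat.lt_or_ge (a + 1) b with h | h
      · exact (case_o1o_e b (a + 1) s h.le).swapA
      · exact (case_o1o_e (a + 1) b s h).swapA.mirror
    · rcases b with _ | b
      · omega
      · exact (case_lift a b c s (by omega)).mirror
  · exact (case_ooo_o a c b s (by omega)).swapB

theorem ex_a2_one (a b c s : ℕ) (ha : 1 ≤ a) (hb : 1 ≤ b) (hc : 1 ≤ c) (hs : 1 ≤ s) :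
    Ex a 1 b c s := by
  by_cases h : b % 2 < c % 2 ∨ b % 2 = c % 2 ∧ c ≤ b
  · exact ex_a2_one_aux a b c s ha hb hc hs h
  · exact (ex_a2_one_aux a c b s ha hc hb hs (by omega)).swapB

theorem ex_all (s : ℕ) (hs : 1 ≤ s) : ∀ a a' b b' : ℕ, 1 ≤ a → 1 ≤ a' → 1 ≤ b → 1 ≤ b' →
    Ex a a' b b' s := by
  intro a
  induction a with
  | zero => intro a' b b' h; omega
  | succ a ih =>
    intro a' b b' ha ha' hb hb'
    by_cases h1 : a = 0
    · subst h1; exact (ex_a2_one a' b b' s ha' hb hb' hs).swapA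
    by_cases h2 : a' = 1
    · subst h2; exact ex_a2_one (a + 1) b b' s ha hb hb' hs
    by_cases h3 : b = 1
    · subst h3; exact (ex_a2_one b' (a + 1) a' s hb' ha ha' hs).swapA.mirror
    by_cases h4 : b' = 1
    · subst h4; exact (ex_a2_one b (a + 1) a' s hb ha ha' hs).mirror
    obtain ⟨g, hg⟩ := ih (a' - 1) (b - 1) (b' - 1) (by omega) (by omega) (by omega) (by omega)
    obtain ⟨g', hg'⟩ := hg.extSet {0, 1, 2, 3} _ _ (by decide) (by
      intro k hk hk'
      exfalso
      revert hk hk'; revert k; decide)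
    have e : (fun k => if k ∈ ({0, 1, 2, 3} : Finset (Fin 5)) then
        ![a, a' - 1, b - 1, b' - 1, s] k + 1 else ![a, a' - 1, b - 1, b' - 1, s] k) =
        ![a + 1, a', b, b', s] := by
      funext k
      fin_cases k <;> simp <;> omega
    rw [e] at hg'
    exact ⟨g', hg'⟩

def dsRel (s : ℕ) (L R : List ℕ) : DSVert s L R → DSVert s L R → Prop := fun x y =>
    match x, y with
    | Sum.inl a, Sum.inl b => (b : ℕ) = (a : ℕ) + 1
    | Sum.inl a, Sum.inr (Sum.inl p) => (a : ℕ) = 0 ∧ (p.2 : ℕ) = 0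
    | Sum.inl a, Sum.inr (Sum.inr p) => (a : ℕ) = s ∧ (p.2 : ℕ) = 0
    | Sum.inr (Sum.inl p), Sum.inr (Sum.inl q) => p.1 = q.1 ∧ (q.2 : ℕ) = (p.2 : ℕ) + 1
    | Sum.inr (Sum.inr p), Sum.inr (Sum.inr q) => p.1 = q.1 ∧ (q.2 : ℕ) = (p.2 : ℕ) + 1
    | _, _ => False

theorem dsRel_asymm {s : ℕ} {L R : List ℕ} {u v : DSVert s L R} (h : dsRel s L R u v) :
    ¬ dsRel s L R v u := by
  rcases u with a | ⟨i, p⟩ | ⟨i, p⟩ <;> rcases v with b | ⟨j, q⟩ | ⟨j, q⟩ <;>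
    simp only [dsRel] at h ⊢ <;> first | omega | tauto

theorem ds_adj {s : ℕ} {L R : List ℕ} {u v : DSVert s L R} :
    (DoubleSpider s L R).Adj u v ↔ dsRel s L R u v ∨ dsRel s L R v u := by
  have : (DoubleSpider s L R) = SimpleGraph.fromRel (dsRel s L R) := rfl
  rw [this, SimpleGraph.fromRel_adj]
  constructor
  · exact fun h => h.2
  · intro h
    refine ⟨?_, h⟩
    rintro rfl
    rcases h with h | h <;> exact dsRel_asymm h h

/-- Weight of the edge from a vertex to its parent. -/
def upW (s : ℕ) (L R : List ℕ) (uC : ℕ → ℕ) (uL uR : ℕ → ℕ → ℕ) : DSVert s L R → ℕ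
  | Sum.inl a => uC a
  | Sum.inr (Sum.inl p) => uL p.1 p.2
  | Sum.inr (Sum.inr p) => uR p.1 p.2

/-- Edge labeling obtained from the weights. -/
def labW (s : ℕ) (L R : List ℕ) (up : DSVert s L R → ℕ) : Sym2 (DSVert s L R) → ℕ :=
  Sym2.lift ⟨fun u v => (if dsRel s L R u v then up v else 0) +
    (if dsRel s L R v u then up u else 0), fun u v => add_comm _ _⟩

theorem labW_rel {s : ℕ} {L R : List ℕ} (up : DSVert s L R → ℕ) {u v : DSVert s L R}
    (h : dsRel s L R u v) : labW s L R up s(u, v) = up v := by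
  simp [labW, h, dsRel_asymm h]

theorem vertexSum_eq_adj {V : Type*} [Fintype V] (G : SimpleGraph V) (f : Sym2 V → ℕ) (u : V) :
    vertexSum G f u = ∑ v, if G.Adj u v then f s(u, v) else 0 := by
  unfold vertexSum
  rw [← Finset.sum_filter]
  symm
  refine Finset.sum_bij (fun v _ => s(u, v)) ?_ ?_ ?_ ?_
  · intro v hv
    simpa [SimpleGraph.mem_incidenceFinset] using hv
  · intro v _ w _ h
    exact Sym2.congr_right.1 h
  · intro e he
    rw [SimpleGraph.mem_incidenceFinset] at he
    obtain ⟨h1, h2⟩ := he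
    obtain ⟨v, rfl⟩ := h2
    exact ⟨v, by simpa using h1, rfl⟩
  · intro v _; rfl

theorem fin_sum_ite (k c : ℕ) (h : ℕ → ℕ) :
    (∑ x : Fin k, if (x : ℕ) = c then h x else 0) = if c < k then h c else 0 := by
  by_cases hc : c < k
  · rw [if_pos hc, Finset.sum_eq_single (⟨c, hc⟩ : Fin k)]
    · simp
    · intro b _ hb
      rw [if_neg]
      intro h'; exact hb (Fin.ext h')
    · simp
  · rw [if_neg hc]
    apply Finset.sum_eq_zero
    intro x _
    rw [if_neg]
    intro h'; have := x.2; omega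

theorem sum_get_ite (l : List ℕ) (i : Fin l.length) (c : ℕ) (h : ℕ → ℕ → ℕ) :
    (∑ x : (j : Fin l.length) × Fin (l.get j), if i = x.1 ∧ (x.2 : ℕ) = c then h x.1 x.2 else 0) =
      if c < l.get i then h i c else 0 := by
  rw [Fintype.sum_sigma, Finset.sum_eq_single i]
  · simpa using fin_sum_ite (l.get i) c (h i)
  · intro j _ hj
    apply Finset.sum_eq_zero
    intro x _
    rw [if_neg]
    rintro ⟨h1, -⟩; exact hj h1.symm
  · simp

theorem sum_get_zero (l : List ℕ) (hl : ∀ x ∈ l, 1 ≤ x) (y z : ℕ) (h : ℕ → ℕ → ℕ) :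
    (∑ x : (j : Fin l.length) × Fin (l.get j), if y = z ∧ (x.2 : ℕ) = 0 then h x.1 x.2 else 0) =
      if y = z then ∑ i : Fin l.length, h i 0 else 0 := by
  rw [Fintype.sum_sigma]
  by_cases hP : y = z
  · simp only [hP, true_and, if_true]
    apply Finset.sum_congr rfl
    intro i _
    have := fin_sum_ite (l.get i) 0 (h i)
    rw [if_pos (show 0 < l.get i from hl _ (List.get_mem l i))] at this
    exact this
  · simp [hP]

theorem vertexSum_labW {s : ℕ} {L R : List ℕ} (hL : ∀ ℓ ∈ L, 1 ≤ ℓ) (hR : ∀ ℓ ∈ R, 1 ≤ ℓ)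
    (uC : ℕ → ℕ) (uL uR : ℕ → ℕ → ℕ) (u : DSVert s L R) :
    vertexSum (DoubleSpider s L R) (labW s L R (upW s L R uC uL uR)) u =
    match u with
    | Sum.inl a => (if (a : ℕ) = 0 then 0 else uC a) + (if (a : ℕ) < s then uC (a + 1) else 0) +
        (if (a : ℕ) = 0 then ∑ i : Fin L.length, uL i 0 else 0) +
        (if (a : ℕ) = s then ∑ i : Fin R.length, uR i 0 else 0)
    | Sum.inr (Sum.inl p) => uL p.1 p.2 +
        (if (p.2 : ℕ) + 1 < L.get p.1 then uL p.1 (p.2 + 1) else 0)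
    | Sum.inr (Sum.inr p) => uR p.1 p.2 +
        (if (p.2 : ℕ) + 1 < R.get p.1 then uR p.1 (p.2 + 1) else 0) := by
  set up := upW s L R uC uL uR with hup
  have h1 : vertexSum (DoubleSpider s L R) (labW s L R up) u =
      (∑ v, if dsRel s L R v u then up u else 0) + ∑ v, if dsRel s L R u v then up v else 0 := by
    rw [vertexSum_eq_adj, ← Finset.sum_add_distrib]
    apply Finset.sum_congr rfl
    intro v _
    by_cases h : dsRel s L R u v
    · rw [if_pos (ds_adj.2 (Or.inl h)), labW_rel _ h]
      simp [h, dsRel_asymm h]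
    · by_cases h' : dsRel s L R v u
      · rw [if_pos (ds_adj.2 (Or.inr h')), Sym2.eq_swap, labW_rel _ h']
        simp [h, h']
      · rw [if_neg (fun hh => (ds_adj.1 hh).elim h h')]
        simp [h, h']
  rw [h1]
  simp only [Fintype.sum_sum_type]
  rcases u with a | ⟨i, p⟩ | ⟨i, p⟩
  · have e1 : (∑ b : Fin (s + 1), if (a : ℕ) = (b : ℕ) + 1 then uC a else 0) =
        if (a : ℕ) = 0 then 0 else uC a := by
      by_cases ha : (a : ℕ) = 0
      · simp [ha]
      · have := fin_sum_ite (s + 1) (a - 1) (fun _ => uC a)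
        rw [if_pos (by have := a.2; omega)] at this
        rw [if_neg ha, ← this]
        apply Finset.sum_congr rfl
        intro b _
        congr 1
        simp only [eq_iff_iff]; omega
    have e2 := fin_sum_ite (s + 1) (a + 1) uC
    have e3 := sum_get_zero L hL a 0 uL
    have e4 := sum_get_zero R hR a s uR
    simp only [dsRel, hup, upW, if_false, Finset.sum_const_zero, add_zero]
    rw [e1, e2, e3, e4]
    simp only [add_lt_add_iff_right]
    omega
  · have e1 := sum_get_ite L i (p + 1) uL
    have e2 : (∑ b : Fin (s + 1), if (b : ℕ) = 0 ∧ (p : ℕ) = 0 then uL i p else 0) =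
        if (p : ℕ) = 0 then uL i p else 0 := by
      by_cases hp : (p : ℕ) = 0
      · have := fin_sum_ite (s + 1) 0 (fun _ => uL i p)
        simpa [hp] using this
      · simp [hp]
    have e3 : (∑ x : (j : Fin L.length) × Fin (L.get j),
        if x.1 = i ∧ (p : ℕ) = (x.2 : ℕ) + 1 then uL i p else 0) =
        if (p : ℕ) = 0 then 0 else uL i p := by
      by_cases hp : (p : ℕ) = 0
      · simp [hp]
      · have := sum_get_ite L i (p - 1) (fun _ _ => uL i p)
        rw [if_pos (by have := p.2; omega)] at this
        rw [if_neg hp, ← this]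
        apply Finset.sum_congr rfl
        intro b _
        congr 1
        simp only [eq_iff_iff]
        constructor
        · rintro ⟨h, h'⟩; exact ⟨h.symm, by omega⟩
        · rintro ⟨h, h'⟩; exact ⟨h.symm, by omega⟩
    simp only [dsRel, hup, upW, if_false, Finset.sum_const_zero, add_zero, zero_add]
    rw [e1, e2, e3]
    split_ifs <;> omega
  · have e1 := sum_get_ite R i (p + 1) uR
    have e2 : (∑ b : Fin (s + 1), if (b : ℕ) = s ∧ (p : ℕ) = 0 then uR i p else 0) =
        if (p : ℕ) = 0 then uR i p else 0 := by
      by_cases hp : (p : ℕ) = 0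
      · have := fin_sum_ite (s + 1) s (fun _ => uR i p)
        simpa [hp] using this
      · simp [hp]
    have e3 : (∑ x : (j : Fin R.length) × Fin (R.get j),
        if x.1 = i ∧ (p : ℕ) = (x.2 : ℕ) + 1 then uR i p else 0) =
        if (p : ℕ) = 0 then 0 else uR i p := by
      by_cases hp : (p : ℕ) = 0
      · simp [hp]
      · have := sum_get_ite R i (p - 1) (fun _ _ => uR i p)
        rw [if_pos (by have := p.2; omega)] at this
        rw [if_neg hp, ← this]
        apply Finset.sum_congr rfl
        intro b _
        congr 1
        simp only [eq_iff_iff]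
        constructor
        · rintro ⟨h, h'⟩; exact ⟨h.symm, by omega⟩
        · rintro ⟨h, h'⟩; exact ⟨h.symm, by omega⟩
    simp only [dsRel, hup, upW, if_false, Finset.sum_const_zero, add_zero, zero_add]
    rw [e1, e2, e3]
    split_ifs <;> omega

theorem degree_eq {s : ℕ} {L R : List ℕ} (u : DSVert s L R) :
    (DoubleSpider s L R).degree u =
    vertexSum (DoubleSpider s L R)
      (labW s L R (upW s L R (fun _ => 1) (fun _ _ => 1) (fun _ _ => 1))) u := by
  rw [vertexSum_eq_adj, ← SimpleGraph.card_neighborFinset_eq_degree, Finset.card_eq_sum_ones,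
    ← Finset.sum_filter]
  refine Finset.sum_congr (by ext v; simp) ?_
  intro v hv
  have hv : (DoubleSpider s L R).Adj u v := by simpa using hv
  have h1 : ∀ w, upW s L R (fun _ => 1) (fun _ _ => 1) (fun _ _ => 1) w = 1 := by
    rintro (_ | _ | _) <;> rfl
  rcases ds_adj.1 hv with h | h
  · rw [labW_rel _ h, h1]
  · rw [Sym2.eq_swap, labW_rel _ h, h1]

theorem dsRel_parent_unique {s : ℕ} {L R : List ℕ} {u u' v : DSVert s L R}
    (h : dsRel s L R u v) (h' : dsRel s L R u' v) : u = u' := by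
  rcases u with a | ⟨i, p⟩ | ⟨i, p⟩ <;> rcases u' with b | ⟨j, q⟩ | ⟨j, q⟩ <;>
    rcases v with c | ⟨k, r⟩ | ⟨k, r⟩ <;> simp only [dsRel] at h h' <;>
    first
    | exact (by first | exact h | exact h' : False).elim
    | exact congrArg Sum.inl (Fin.ext (by omega))
    | (exfalso; omega)
    | (obtain ⟨rfl, h⟩ := h
       obtain ⟨rfl, h'⟩ := h'
       have : p = q := Fin.ext (by omega)
       rw [this])

theorem dsRel_parent_exists {s : ℕ} {L R : List ℕ} (v : DSVert s L R) :
    (∃ u, dsRel s L R u v) ↔ v ≠ vL s L R := by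
  constructor
  · rintro ⟨u, hu⟩ rfl
    rcases u with a | ⟨i, p⟩ | ⟨i, p⟩ <;> simp [dsRel, vL] at hu
  · intro hv
    rcases v with c | ⟨k, r⟩ | ⟨k, r⟩
    · have : (c : ℕ) ≠ 0 := fun h => hv (congrArg Sum.inl (Fin.ext h))
      exact ⟨Sum.inl ⟨c - 1, by omega⟩, by simp only [dsRel]; omega⟩
    · by_cases hr : (r : ℕ) = 0
      · exact ⟨Sum.inl 0, by simp [dsRel, hr]⟩
      · exact ⟨Sum.inr (Sum.inl ⟨k, ⟨r - 1, by omega⟩⟩), by exact ⟨rfl, show (r : ℕ) = (r : ℕ) - 1 + 1 by omega⟩⟩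
    · by_cases hr : (r : ℕ) = 0
      · exact ⟨Sum.inl (Fin.last s), by simp [dsRel, hr]⟩
      · exact ⟨Sum.inr (Sum.inr ⟨k, ⟨r - 1, by omega⟩⟩), by exact ⟨rfl, show (r : ℕ) = (r : ℕ) - 1 + 1 by omega⟩⟩

theorem bijOn_labW {s : ℕ} {L R : List ℕ} (up : DSVert s L R → ℕ) (N : ℕ)
    (hinj : ∀ v v', v ≠ vL s L R → v' ≠ vL s L R → up v = up v' → v = v')
    (hmem : ∀ v, v ≠ vL s L R → up v ∈ Set.Icc 1 N)
    (hsurj : ∀ m ∈ Set.Icc 1 N, ∃ v, v ≠ vL s L R ∧ up v = m) :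
    Set.BijOn (labW s L R up) (DoubleSpider s L R).edgeSet
      (Set.Icc 1 (DoubleSpider s L R).edgeFinset.card) := by
  have hedge : ∀ e ∈ (DoubleSpider s L R).edgeSet, ∃ u v, dsRel s L R u v ∧ e = s(u, v) := by
    intro e
    induction e using Sym2.ind with
    | _ x y =>
      intro h
      rw [SimpleGraph.mem_edgeSet] at h
      rcases ds_adj.1 h with h | h
      · exact ⟨x, y, h, rfl⟩
      · exact ⟨y, x, h, Sym2.eq_swap⟩
  have key : Set.BijOn (labW s L R up) (DoubleSpider s L R).edgeSet (Set.Icc 1 N) := by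
    refine ⟨?_, ?_, ?_⟩
    · intro e he
      obtain ⟨u, v, h, rfl⟩ := hedge e he
      rw [labW_rel _ h]
      exact hmem v ((dsRel_parent_exists v).1 ⟨u, h⟩)
    · intro e he e' he' heq
      obtain ⟨u, v, h, rfl⟩ := hedge e he
      obtain ⟨u', v', h', rfl⟩ := hedge e' he'
      rw [labW_rel _ h, labW_rel _ h'] at heq
      have := hinj v v' ((dsRel_parent_exists v).1 ⟨u, h⟩) ((dsRel_parent_exists v').1 ⟨u', h'⟩) heq
      subst this
      rw [dsRel_parent_unique h h']
    · intro m hm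
      obtain ⟨v, hv, rfl⟩ := hsurj m hm
      obtain ⟨u, hu⟩ := (dsRel_parent_exists v).2 hv
      exact ⟨s(u, v), (SimpleGraph.mem_edgeSet _).2 (ds_adj.2 (Or.inl hu)), labW_rel _ hu⟩
  have hcard : (DoubleSpider s L R).edgeFinset.card = N := by
    have h1 := key.image_eq
    have h2 := key.injOn.ncard_image
    rw [h1] at h2
    rw [← SimpleGraph.coe_edgeFinset, Set.ncard_coe_finset, ← Finset.coe_Icc,
      Set.ncard_coe_finset, Nat.card_Icc] at h2
    omega
  rw [hcard]; exact key

theorem Good.surj {n : Fin 5 → ℕ} {g : Fin 5 → ℕ → ℕ} (h : Good n g) (m : ℕ)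
    (hm : m ∈ Set.Icc 1 (n 0 + n 1 + n 2 + n 3 + n 4)) : ∃ i j, j < n i ∧ g i j = m := by
  let F : (i : Fin 5) × Fin (n i) → ℕ := fun x => g x.1 x.2
  have hF : Function.Injective F := by
    rintro ⟨i, j⟩ ⟨i', j'⟩ he
    obtain ⟨h1, h2⟩ := h.inj i j i' j' j.2 j'.2 he
    subst h1
    rw [Fin.ext h2]
  have hsub : Finset.univ.image F ⊆ Finset.Icc 1 (n 0 + n 1 + n 2 + n 3 + n 4) := by
    intro x hx
    obtain ⟨y, -, rfl⟩ := Finset.mem_image.1 hx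
    exact Finset.mem_Icc.2 (h.range y.1 y.2 y.2.2)
  have heq := Finset.eq_of_subset_of_card_le hsub (by
    rw [Finset.card_image_of_injective _ hF, Finset.card_univ, Fintype.card_sigma]
    simp [Fin.sum_univ_five])
  have : m ∈ Finset.univ.image F := by rw [heq]; exact Finset.mem_Icc.2 hm
  obtain ⟨⟨i, j⟩, -, hy⟩ := Finset.mem_image.1 this
  exact ⟨i, j, j.2, hy⟩

/-- Index of a left leg. -/
def kL (i : ℕ) : Fin 5 := if i = 0 then 0 else 1
/-- Index of a right leg. -/
def kR (i : ℕ) : Fin 5 := if i = 0 then 2 else 3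

theorem kL_ne (i : ℕ) : kL i ≠ 4 := by unfold kL; split_ifs <;> decide
theorem kR_ne (i : ℕ) : kR i ≠ 4 := by unfold kR; split_ifs <;> decide
theorem kL_ne_kR (i j : ℕ) : kL i ≠ kR j := by unfold kL kR; split_ifs <;> decide
theorem kL_inj {i j : ℕ} (hi : i < 2) (hj : j < 2) (h : kL i = kL j) : i = j := by
  interval_cases i <;> interval_cases j <;> simp_all [kL]
theorem kR_inj {i j : ℕ} (hi : i < 2) (hj : j < 2) (h : kR i = kR j) : i = j := by
  interval_cases i <;> interval_cases j <;> simp_all [kR]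

/-- Position of a vertex, as a path together with a distance. -/
def posV (s : ℕ) (L R : List ℕ) (n : Fin 5 → ℕ) : DSVert s L R → Fin 5 × ℕ
  | Sum.inl a => (4, a)
  | Sum.inr (Sum.inl p) => (kL p.1, n (kL p.1) - 1 - p.2)
  | Sum.inr (Sum.inr p) => (kR p.1, n (kR p.1) - 1 - p.2)

theorem posV_inj {s : ℕ} {L R : List ℕ} {n : Fin 5 → ℕ} (hL : L.length = 2) (hR : R.length = 2)
    (hLn : ∀ i : Fin L.length, L.get i = n (kL i)) (hRn : ∀ i : Fin R.length, R.get i = n (kR i)) :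
    Function.Injective (posV s L R n) := by
  intro u v h
  rcases u with a | ⟨i, p⟩ | ⟨i, p⟩ <;> rcases v with b | ⟨j, q⟩ | ⟨j, q⟩ <;>
    simp only [posV, Prod.mk.injEq, true_and] at h
  · exact congrArg Sum.inl (Fin.ext h)
  · exact absurd h.1.symm (kL_ne _)
  · exact absurd h.1.symm (kR_ne _)
  · exact absurd h.1 (kL_ne _)
  · obtain ⟨h1, h2⟩ := h
    have hij : i = j := Fin.ext (kL_inj (hL ▸ i.2) (hL ▸ j.2) h1)
    subst hij
    have h3 := hLn i
    have h4 := p.2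
    have h5 := q.2
    have : p = q := Fin.ext (by omega)
    rw [this]
  · exact absurd h.1 (kL_ne_kR _ _)
  · exact absurd h.1 (kR_ne _)
  · exact absurd h.1.symm (kL_ne_kR _ _)
  · obtain ⟨h1, h2⟩ := h
    have hij : i = j := Fin.ext (kR_inj (hR ▸ i.2) (hR ▸ j.2) h1)
    subst hij
    have h3 := hRn i
    have h4 := p.2
    have h5 := q.2
    have : p = q := Fin.ext (by omega)
    rw [this]

theorem main_aux {s : ℕ} {L R : List ℕ} (hs : 1 ≤ s) (hL : ∀ ℓ ∈ L, 1 ≤ ℓ) (hR : ∀ ℓ ∈ R, 1 ≤ ℓ)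
    (hL2 : L.length = 2) (hR2 : R.length = 2) {n : Fin 5 → ℕ} {g : Fin 5 → ℕ → ℕ}
    (hg : Good n g) (hn : n 4 = s)
    (hLn : ∀ i : Fin L.length, L.get i = n (kL i)) (hRn : ∀ i : Fin R.length, R.get i = n (kR i)) :
    IsStronglyAntimagic (DoubleSpider s L R) := by
  set uC : ℕ → ℕ := fun a => g 4 (a - 1) with huC
  set uL : ℕ → ℕ → ℕ := fun i p => g (kL i) (n (kL i) - 1 - p) with huL
  set uR : ℕ → ℕ → ℕ := fun i p => g (kR i) (n (kR i) - 1 - p) with huR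
  have hpi := posV_inj (s := s) hL2 hR2 hLn hRn
  have hsumL : ∀ h : ℕ → ℕ, (∑ i : Fin L.length, h i) = h 0 + h 1 := by
    intro h; rw [Fin.sum_univ_eq_sum_range h, hL2]; simp [Finset.sum_range_succ]
  have hsumR : ∀ h : ℕ → ℕ, (∑ i : Fin R.length, h i) = h 0 + h 1 := by
    intro h; rw [Fin.sum_univ_eq_sum_range h, hR2]; simp [Finset.sum_range_succ]
  have hcls : ∀ u, ∃ d w, (DoubleSpider s L R).degree u = d ∧
      vertexSum (DoubleSpider s L R) (labW s L R (upW s L R uC uL uR)) u = w ∧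
      ((d = 1 ∧ ∃ k, k ≠ 4 ∧ posV s L R n u = (k, 0) ∧ w = g k 0) ∨
       (d = 2 ∧ ∃ k j, j + 1 < n k ∧ posV s L R n u = (k, j + 1) ∧ w = g k j + g k (j + 1)) ∨
       (d = 3 ∧ posV s L R n u = (4, 0) ∧ w = phiL n g) ∨
       (d = 3 ∧ posV s L R n u = (4, s) ∧ w = phiR n g)) := by
    intro u
    refine ⟨_, _, rfl, rfl, ?_⟩
    rw [degree_eq, vertexSum_labW hL hR, vertexSum_labW hL hR]
    rcases u with a | ⟨i, p⟩ | ⟨i, p⟩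
    · have ha := a.2
      by_cases h0 : (a : ℕ) = 0
      · right; right; left
        have h1 : ¬ (0 = s) := by omega
        have h2 : 0 < s := by omega
        simp only [h0, if_true, h1, h2, if_false, hsumL, posV]
        refine ⟨by simp [hL2], trivial, ?_⟩
        rw [hsumL (fun i => uL i 0)]
        simp [huC, huL, kL, phiL]; omega
      · by_cases h1 : (a : ℕ) = s
        · right; right; right
          have h2 : ¬ (s = 0) := by omega
          simp only [h1, if_true, h2, lt_irrefl, if_false, hsumR, posV]
          refine ⟨by simp [hR2], trivial, ?_⟩
          rw [hsumR (fun i => uR i 0)]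
          simp [huC, huR, kR, phiR, hn]; omega
        · right; left
          have h2 : (a : ℕ) < s := by omega
          simp only [h0, h1, h2, if_true, if_false, posV]
          refine ⟨trivial, 4, a - 1, by omega, ?_, ?_⟩
          · rw [Nat.sub_add_cancel (by omega)]
          · rw [Nat.sub_add_cancel (by omega)]; simp [huC]
    · have hp := p.2
      have hi := hLn i
      simp only [posV]
      by_cases h : (p : ℕ) + 1 < L.get i
      · right; left
        simp only [h, if_true]
        refine ⟨trivial, kL i, n (kL i) - 1 - (p + 1), by omega, ?_, ?_⟩
        · congr 1; omega
        · rw [show n (kL i) - 1 - (p + 1) + 1 = n (kL i) - 1 - p by omega]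
          exact add_comm _ _
      · left
        simp only [h, if_false]
        refine ⟨trivial, kL i, kL_ne _, ?_, ?_⟩
        · congr 1; omega
        · simp only [huL, add_zero]; congr 1; omega
    · have hp := p.2
      have hi := hRn i
      simp only [posV]
      by_cases h : (p : ℕ) + 1 < R.get i
      · right; left
        simp only [h, if_true]
        refine ⟨trivial, kR i, n (kR i) - 1 - (p + 1), by omega, ?_, ?_⟩
        · congr 1; omega
        · rw [show n (kR i) - 1 - (p + 1) + 1 = n (kR i) - 1 - p by omega]
          exact add_comm _ _
      · left
        simp only [h, if_false]
        refine ⟨trivial, kR i, kR_ne _, ?_, ?_⟩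
        · congr 1; omega
        · simp only [huR, add_zero]; congr 1; omega
  -- the label of a non-root vertex
  have hup : ∀ v, v ≠ vL s L R → ∃ k j, j < n k ∧ upW s L R uC uL uR v = g k j ∧
      posV s L R n v = (k, if k = 4 then j + 1 else j) := by
    intro v hv
    rcases v with c | ⟨k, r⟩ | ⟨k, r⟩
    · have h0 : (c : ℕ) ≠ 0 := fun h => hv (congrArg Sum.inl (Fin.ext h))
      have := c.2
      refine ⟨4, c - 1, by omega, rfl, ?_⟩
      rw [if_pos rfl, Nat.sub_add_cancel (by omega)]; rfl
    · have := r.2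
      have := hLn k
      refine ⟨kL k, n (kL k) - 1 - r, by omega, rfl, ?_⟩
      rw [if_neg (kL_ne _)]; rfl
    · have := r.2
      have := hRn k
      refine ⟨kR k, n (kR k) - 1 - r, by omega, rfl, ?_⟩
      rw [if_neg (kR_ne _)]; rfl
  have hdown : ∀ k j, j < n k → ∃ v, v ≠ vL s L R ∧ upW s L R uC uL uR v = g k j := by
    intro k j hj
    have hk : k = 4 ∨ (∃ i, i < 2 ∧ k = kL i) ∨ (∃ i, i < 2 ∧ k = kR i) := by
      fin_cases k
      · exact Or.inr (Or.inl ⟨0, by omega, rfl⟩)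
      · exact Or.inr (Or.inl ⟨1, by omega, rfl⟩)
      · exact Or.inr (Or.inr ⟨0, by omega, rfl⟩)
      · exact Or.inr (Or.inr ⟨1, by omega, rfl⟩)
      · exact Or.inl rfl
    rcases hk with rfl | ⟨i, hi, rfl⟩ | ⟨i, hi, rfl⟩
    · refine ⟨Sum.inl ⟨j + 1, by omega⟩, ?_, rfl⟩
      intro h
      have := congrArg Fin.val (Sum.inl.inj h)
      simp at this
    · have h1 := hLn ⟨i, by omega⟩
      simp only at h1
      refine ⟨Sum.inr (Sum.inl ⟨⟨i, by omega⟩, ⟨n (kL i) - 1 - j, by omega⟩⟩), by simp [vL], ?_⟩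
      simp only [upW, huL]; congr 1; omega
    · have h1 := hRn ⟨i, by omega⟩
      simp only at h1
      refine ⟨Sum.inr (Sum.inr ⟨⟨i, by omega⟩, ⟨n (kR i) - 1 - j, by omega⟩⟩), by simp [vL], ?_⟩
      simp only [upW, huR]; congr 1; omega
  refine ⟨labW s L R (upW s L R uC uL uR), ?_, ?_, ?_⟩
  · apply bijOn_labW _ (n 0 + n 1 + n 2 + n 3 + n 4)
    · intro v v' hv hv' he
      obtain ⟨k, j, hj, e1, e2⟩ := hup v hv
      obtain ⟨k', j', hj', e1', e2'⟩ := hup v' hv'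
      rw [e1, e1'] at he
      obtain ⟨rfl, rfl⟩ := hg.inj _ _ _ _ hj hj' he
      exact hpi (e2.trans e2'.symm)
    · intro v hv
      obtain ⟨k, j, hj, e1, e2⟩ := hup v hv
      rw [e1]; exact hg.range k j hj
    · intro m hm
      obtain ⟨k, j, hj, rfl⟩ := hg.surj m hm
      exact hdown k j hj
  · intro u v huv
    apply hpi
    obtain ⟨d, w, -, e, h⟩ := hcls u
    obtain ⟨d', w', -, e', h'⟩ := hcls v
    rw [e, e'] at huv
    subst huv
    rcases h with ⟨-, k, hk, hp, hw⟩ | ⟨-, k, j, hj, hp, hw⟩ | ⟨-, hp, hw⟩ | ⟨-, hp, hw⟩ <;>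
    rcases h' with ⟨-, k', hk', hp', hw'⟩ | ⟨-, k', j', hj', hp', hw'⟩ | ⟨-, hp', hw'⟩ | ⟨-, hp', hw'⟩ <;>
    rw [hp, hp']
    · obtain ⟨rfl, -⟩ := hg.inj k 0 k' 0 (hg.pos _) (hg.pos _) (hw.symm.trans hw')
      rfl
    · have := hg.leaf k k' j' hk hj'; omega
    · have := hg.leafphi k hk; omega
    · have := hg.leafphi k hk; omega
    · have := hg.leaf k' k j hk' hj; omega
    · obtain ⟨rfl, rfl⟩ := hg.sinj k j k' j' hj hj' (hw.symm.trans hw')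
      rfl
    · have := hg.sphi k j hj; omega
    · have := hg.sphi k j hj; omega
    · have := hg.leafphi k' hk'; omega
    · have := hg.sphi k' j' hj'; omega
    · have := hg.ne; omega
    · have := hg.leafphi k' hk'; omega
    · have := hg.sphi k' j' hj'; omega
    · have := hg.ne; omega
  · intro u v huv
    obtain ⟨d, w, ed, e, h⟩ := hcls u
    obtain ⟨d', w', ed', e', h'⟩ := hcls v
    rw [ed, ed'] at huv
    rw [e, e']
    rcases h with ⟨hd, k, hk, hp, hw⟩ | ⟨hd, k, j, hj, hp, hw⟩ | ⟨hd, hp, hw⟩ | ⟨hd, hp, hw⟩ <;>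
    rcases h' with ⟨hd', k', hk', hp', hw'⟩ | ⟨hd', k', j', hj', hp', hw'⟩ | ⟨hd', hp', hw'⟩ | ⟨hd', hp', hw'⟩ <;>
    first
    | omega
    | (have := hg.leaf k k' j' hk hj'; omega)
    | (have := hg.leafphi k hk; omega)
    | (have := hg.sphi k j hj; omega)

/-- Every double spider `DS(L, Pᶜᵒʳᵉ, R)` in which both branch vertices
have degree exactly 3 is strongly antimagic. -/
theorem doubleSpider_deg_three_isStronglyAntimagic (s : ℕ) (hs : 1 ≤ s) (L R : List ℕ)
    (hL : ∀ ℓ ∈ L, 1 ≤ ℓ) (hR : ∀ ℓ ∈ R, 1 ≤ ℓ)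
    (hl : (DoubleSpider s L R).degree (vL s L R) = 3)
    (hr : (DoubleSpider s L R).degree (vR s L R) = 3) :
    IsStronglyAntimagic (DoubleSpider s L R) := by
  have h0 : ¬ (0 = s) := by omega
  have h0' : ¬ (s = 0) := by omega
  have h1 : 0 < s := by omega
  rw [degree_eq, vertexSum_labW hL hR] at hl hr
  simp [vL, h0, h1] at hl
  simp [vR, h0'] at hr
  have hL2 : L.length = 2 := by omega
  have hR2 : R.length = 2 := by omega
  obtain ⟨a, a', rfl⟩ := List.length_eq_two.1 hL2
  obtain ⟨b, b', rfl⟩ := List.length_eq_two.1 hR2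
  obtain ⟨g, hg⟩ := ex_all s hs a a' b b' (hL _ (by simp)) (hL _ (by simp))
    (hR _ (by simp)) (hR _ (by simp))
  refine main_aux hs hL hR hL2 hR2 hg rfl ?_ ?_
  · intro i
    change Fin 2 at i
    fin_cases i <;> rfl
  · intro i
    change Fin 2 at i
    fin_cases i <;> rfl

end
end

section
/- Let DS(L, P^core, R) be a double spider with deg(v_l) > deg(v_r) ≥ 3 such that R contains no path of even length and no odd-length path of length at least 3 (equivalently, every path in R has length exactly 1). Then DS(L, P^core, R) is strongly antimagic. -/
open Classical

noncomputable section

section TreeLemmas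
variable {V : Type*} [Fintype V]

structure TreeLike (G : SimpleGraph V) (r : V) (p : V → V) (d : V → ℕ) : Prop where
  hd : ∀ x, x ≠ r → d (p x) < d x
  hG : ∀ x y, G.Adj x y ↔ (x ≠ r ∧ p x = y) ∨ (y ≠ r ∧ p y = x)

variable {G : SimpleGraph V} {r : V} {p : V → V} {d : V → ℕ}

theorem TreeLike.inj (h : TreeLike G r p d) {x y : V} (hx : x ≠ r) (hy : y ≠ r)
    (e : s(x, p x) = s(y, p y)) : x = y := by
  rw [Sym2.eq_iff] at e
  rcases e with ⟨h1, _⟩ | ⟨h1, h2⟩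
  · exact h1
  · have a := h.hd x hx
    have b := h.hd y hy
    rw [h2] at a
    rw [← h1] at b
    omega

theorem TreeLike.edgeSet_eq (h : TreeLike G r p d) :
    G.edgeSet = (fun x => s(x, p x)) '' {x | x ≠ r} := by
  ext e
  induction e using Sym2.ind with
  | _ x y =>
    rw [SimpleGraph.mem_edgeSet, h.hG]
    constructor
    · rintro (⟨h1, h2⟩ | ⟨h1, h2⟩)
      · exact ⟨x, h1, by simp [h2]⟩
      · exact ⟨y, h1, by simp [h2, Sym2.eq_swap]⟩
    · rintro ⟨z, hz, e⟩
      simp only [Sym2.eq_iff] at e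
      rcases e with ⟨h1, h2⟩ | ⟨h1, h2⟩
      · subst h1; exact Or.inl ⟨hz, h2⟩
      · subst h1; exact Or.inr ⟨hz, h2⟩

theorem TreeLike.incidence_eq (h : TreeLike G r p d) (u : V) :
    G.incidenceFinset u =
      (Finset.univ.filter (fun x => x ≠ r ∧ (x = u ∨ p x = u))).image (fun x => s(x, p x)) := by
  ext e
  rw [SimpleGraph.mem_incidenceFinset, SimpleGraph.incidenceSet, Set.mem_sep_iff, h.edgeSet_eq]
  simp only [Set.mem_image, Finset.mem_image, Finset.mem_filter, Finset.mem_univ, true_and,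
    Set.mem_ofPred_eq]
  constructor
  · rintro ⟨⟨x, hx, rfl⟩, hu⟩
    rw [Sym2.mem_iff] at hu
    exact ⟨x, ⟨hx, by tauto⟩, rfl⟩
  · rintro ⟨x, ⟨hx, hu⟩, rfl⟩
    refine ⟨⟨x, hx, rfl⟩, ?_⟩
    rw [Sym2.mem_iff]
    tauto

theorem TreeLike.degree_eq (h : TreeLike G r p d) (u : V) :
    G.degree u = (Finset.univ.filter (fun x => x ≠ r ∧ (x = u ∨ p x = u))).card := by
  rw [← SimpleGraph.card_incidenceFinset_eq_degree, h.incidence_eq, Finset.card_image_of_injOn]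
  intro x hx y hy e
  simp only [Finset.coe_filter, Finset.mem_univ, true_and, Set.mem_ofPred_eq] at hx hy
  exact h.inj hx.1 hy.1 e

theorem TreeLike.edge_card (h : TreeLike G r p d) :
    G.edgeFinset.card = Fintype.card V - 1 := by
  have : G.edgeFinset = (Finset.univ.erase r).image (fun x => s(x, p x)) := by
    ext e
    rw [SimpleGraph.mem_edgeFinset, h.edgeSet_eq]
    simp
  rw [this, Finset.card_image_of_injOn]
  · simp
  · intro x hx y hy e
    simp at hx hy
    exact h.inj hx hy e

theorem TreeLike.labeling (h : TreeLike G r p d) (g : V → ℕ)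
    (hg : Set.BijOn g {x | x ≠ r} (Set.Icc 1 (Fintype.card V - 1))) :
    ∃ f : Sym2 V → ℕ, Set.BijOn f G.edgeSet (Set.Icc 1 G.edgeFinset.card) ∧
      ∀ u, vertexSum G f u =
        ∑ x ∈ Finset.univ.filter (fun x => x ≠ r ∧ (x = u ∨ p x = u)), g x := by
  let f : Sym2 V → ℕ := fun e =>
    if hh : ∃ x, x ≠ r ∧ e = s(x, p x) then g hh.choose else 0
  have hf : ∀ x, x ≠ r → f s(x, p x) = g x := by
    intro x hx
    have hh : ∃ y, y ≠ r ∧ s(x, p x) = s(y, p y) := ⟨x, hx, rfl⟩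
    have := hh.choose_spec
    simp only [f, dif_pos hh]
    rw [← h.inj hx this.1 this.2]
  refine ⟨f, ?_, ?_⟩
  · rw [h.edge_card, h.edgeSet_eq]
    refine ⟨?_, ?_, ?_⟩
    · rintro _ ⟨x, hx, rfl⟩
      show f s(x, p x) ∈ _
      rw [hf x hx]; exact hg.mapsTo hx
    · rintro _ ⟨x, hx, rfl⟩ _ ⟨y, hy, rfl⟩ e
      change f s(x, p x) = f s(y, p y) at e
      rw [hf x hx, hf y hy] at e
      rw [hg.injOn hx hy e]
    · intro n hn
      obtain ⟨x, hx, rfl⟩ := hg.surjOn hn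
      exact ⟨_, ⟨x, hx, rfl⟩, hf x hx⟩
  · intro u
    rw [vertexSum, h.incidence_eq, Finset.sum_image]
    · apply Finset.sum_congr rfl
      intro x hx
      simp only [Finset.mem_filter] at hx
      exact hf x hx.2.1
    · intro x hx y hy e
      simp only [Finset.coe_filter, Finset.mem_univ, true_and, Set.mem_ofPred_eq] at hx hy
      exact h.inj hx.1 hy.1 e

theorem TreeLike.degree_eq' (h : TreeLike G r p d) (u : V) (S : Finset V)
    (hS : ∀ x, x ∈ S ↔ x ≠ r ∧ (x = u ∨ p x = u)) : G.degree u = S.card := by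
  rw [h.degree_eq]
  congr 1
  ext x
  rw [hS, Finset.mem_filter]
  simp only [Finset.mem_univ, true_and]

theorem TreeLike.labeling' (h : TreeLike G r p d) (g : V → ℕ)
    (hg : Set.BijOn g {x | x ≠ r} (Set.Icc 1 (Fintype.card V - 1))) :
    ∃ f : Sym2 V → ℕ, Set.BijOn f G.edgeSet (Set.Icc 1 G.edgeFinset.card) ∧
      ∀ (u : V) (S : Finset V), (∀ x, x ∈ S ↔ x ≠ r ∧ (x = u ∨ p x = u)) →
        vertexSum G f u = ∑ x ∈ S, g x := by
  obtain ⟨f, h1, h2⟩ := h.labeling g hg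
  refine ⟨f, h1, fun u S hS => ?_⟩
  rw [h2]
  congr 1
  ext x
  rw [hS, Finset.mem_filter]
  simp only [Finset.mem_univ, true_and]

end TreeLemmas

section Rank
variable {V : Type*} [Fintype V] (c t : V → ℕ)

/-- lexicographic comparison of keys -/
def keyLE (x y : V) : Prop := c x < c y ∨ (c x = c y ∧ t x ≤ t y)

/-- The rank label. -/
def rk (x : V) : ℕ := (Finset.univ.filter (fun y => keyLE c t y x)).card

/-- Number of elements of class at most `k`. -/
def cnt (k : ℕ) : ℕ := (Finset.univ.filter (fun y : V => c y ≤ k)).card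

variable {c t}

theorem rk_le {x y : V} (h : c x < c y ∨ (c x = c y ∧ t x ≤ t y)) : rk c t x ≤ rk c t y := by
  apply Finset.card_le_card
  intro z hz
  simp only [Finset.mem_filter, Finset.mem_univ, true_and] at hz ⊢
  simp only [keyLE] at hz ⊢
  omega

theorem rk_lt {x y : V} (h : c x < c y ∨ (c x = c y ∧ t x < t y)) : rk c t x < rk c t y := by
  apply Finset.card_lt_card
  rw [Finset.ssubset_iff_of_subset]
  · refine ⟨y, ?_, ?_⟩ <;> simp only [Finset.mem_filter, Finset.mem_univ, true_and] <;>
      (try unfold keyLE) <;> omega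
  · intro z hz
    simp only [Finset.mem_filter, Finset.mem_univ, true_and] at hz ⊢
    simp only [keyLE] at hz ⊢
    omega

theorem rk_pos (x : V) : 1 ≤ rk c t x := by
  apply Finset.card_pos.mpr
  exact ⟨x, by rw [Finset.mem_filter]; exact ⟨Finset.mem_univ _, Or.inr ⟨rfl, le_rfl⟩⟩⟩

theorem rk_le_cnt {x : V} {k : ℕ} (h : c x ≤ k) : rk c t x ≤ cnt c k := by
  apply Finset.card_le_card
  intro z hz
  simp only [Finset.mem_filter, Finset.mem_univ, true_and] at hz ⊢
  simp only [keyLE] at hz ⊢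
  omega

theorem cnt_lt_rk {x : V} {k : ℕ} (h : k < c x) : cnt c k < rk c t x := by
  apply Finset.card_lt_card
  rw [Finset.ssubset_iff_of_subset]
  · refine ⟨x, ?_, ?_⟩ <;> simp only [Finset.mem_filter, Finset.mem_univ, true_and] <;>
      (try unfold keyLE) <;> omega
  · intro z hz
    simp only [Finset.mem_filter, Finset.mem_univ, true_and] at hz ⊢
    simp only [keyLE] at hz ⊢
    omega

theorem rk_injective (hi : ∀ x y, c x = c y → t x = t y → x = y) :
    Function.Injective (rk c t) := by
  intro x y h
  by_contra hne
  rcases lt_trichotomy (c x) (c y) with h1 | h1 | h1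
  · have := rk_lt (c := c) (t := t) (Or.inl h1); omega
  · rcases lt_trichotomy (t x) (t y) with h2 | h2 | h2
    · have := rk_lt (c := c) (t := t) (Or.inr ⟨h1, h2⟩); omega
    · exact hne (hi x y h1 h2)
    · have := rk_lt (c := c) (t := t) (Or.inr ⟨h1.symm, h2⟩); omega
  · have := rk_lt (c := c) (t := t) (Or.inl h1); omega

/-- if everything with key at most that of `x`, except `x`, is at most `y`, then
`rk x ≤ rk y + 1`. -/
theorem rk_le_succ {x y : V}
    (h : ∀ z, z ≠ x → (c z < c x ∨ (c z = c x ∧ t z ≤ t x)) →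
      (c z < c y ∨ (c z = c y ∧ t z ≤ t y))) : rk c t x ≤ rk c t y + 1 := by
  refine le_trans (Finset.card_le_card (t := insert x (Finset.univ.filter
    (fun z => keyLE c t z y))) ?_) (Finset.card_insert_le _ _)
  intro z hz
  simp only [Finset.mem_filter, Finset.mem_univ, true_and, Finset.mem_insert] at hz ⊢
  simp only [keyLE] at hz ⊢
  by_cases e : z = x
  · exact Or.inl e
  · exact Or.inr (h z e hz)

theorem rk_bijOn (hi : ∀ x y, c x = c y → t x = t y → x = y) (r : V)
    (hr : ∀ x, x ≠ r → c x < c r) :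
    Set.BijOn (rk c t) {x | x ≠ r} (Set.Icc 1 (Fintype.card V - 1)) := by
  have hinj := rk_injective hi
  have hm : Set.MapsTo (rk c t) {x | x ≠ r} (Set.Icc 1 (Fintype.card V - 1)) := by
    intro x hx
    refine ⟨rk_pos x, ?_⟩
    have h1 : rk c t x < rk c t r := rk_lt (Or.inl (hr x hx))
    have h2 : rk c t r ≤ Fintype.card V := Finset.card_le_univ _
    omega
  refine ⟨hm, hinj.injOn, ?_⟩
  have : (Finset.univ.erase r).image (rk c t) = Finset.Icc 1 (Fintype.card V - 1) := by
    apply Finset.eq_of_subset_of_card_le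
    · intro n hn
      simp only [Finset.mem_image, Finset.mem_erase, Finset.mem_univ, and_true] at hn
      obtain ⟨x, hx, rfl⟩ := hn
      have := hm hx
      simpa using this
    · rw [Finset.card_image_of_injective _ hinj]
      simp
  intro n hn
  have hn' : n ∈ (Finset.univ.erase r).image (rk c t) := by rw [this]; simpa using hn
  simp only [Finset.mem_image, Finset.mem_erase, Finset.mem_univ, and_true] at hn'
  obtain ⟨x, hx, rfl⟩ := hn'
  exact ⟨x, hx, rfl⟩

/-- Two consecutive edges at a vertex of degree two. -/
def IsLink (c t : V → ℕ) (x y : V) : Prop :=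
  t y = t x + 1 ∧ ((c x = 0 ∧ c y = 4) ∨ (c x = 4 ∧ c y = 0) ∨ (c x = 4 ∧ c y = 5))

theorem link_aux {x y x' y' : V} (h : IsLink c t x y) (h' : IsLink c t x' y')
    (hlt : t x < t x') : rk c t x + rk c t y ≠ rk c t x' + rk c t y' := by
  obtain ⟨ht, h⟩ := h
  obtain ⟨ht', h'⟩ := h'
  have lt : ∀ a b : V, (c a < c b ∨ (c a = c b ∧ t a < t b)) → rk c t a < rk c t b :=
    fun a b => rk_lt
  have le : ∀ a b : V, (c a < c b ∨ (c a = c b ∧ t a ≤ t b)) → rk c t a ≤ rk c t b :=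
    fun a b => rk_le
  rcases h with h | h | h <;> rcases h' with h' | h' | h'
  · have := lt x x' (by omega); have := lt y y' (by omega); omega
  · have := lt x y' (by omega); have := le y x' (by omega); omega
  · have := lt x x' (by omega); have := lt y y' (by omega); omega
  · have := lt x y' (by omega); have := le y x' (by omega); omega
  · have := lt x x' (by omega); have := lt y y' (by omega); omega
  · have := lt x y' (by omega); have := lt y x' (by omega); omega
  · have := lt x' x (by omega); have := lt y' y (by omega); omega
  · have := lt y' x (by omega); have := lt x' y (by omega); omega
  · have := lt x x' (by omega); have := lt y y' (by omega); omega

theorem link_ne {x y x' y' : V} (h : IsLink c t x y) (h' : IsLink c t x' y')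
    (hlt : t x ≠ t x') : rk c t x + rk c t y ≠ rk c t x' + rk c t y' := by
  rcases lt_or_gt_of_ne hlt with h1 | h1
  · exact link_aux h h' h1
  · exact (link_aux h' h h1).symm

theorem link_gt {x y : V} (h : IsLink c t x y) : cnt c 3 + 1 < rk c t x + rk c t y := by
  obtain ⟨-, h⟩ := h
  have hx := rk_pos (c := c) (t := t) x
  have hy := rk_pos (c := c) (t := t) y
  rcases h with h | h | h
  · have := cnt_lt_rk (c := c) (t := t) (x := y) (k := 3) (by omega); omega
  · have := cnt_lt_rk (c := c) (t := t) (x := x) (k := 3) (by omega); omega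
  · have := cnt_lt_rk (c := c) (t := t) (x := x) (k := 3) (by omega); omega

end Rank


section DS
variable {s : ℕ} {L R : List ℕ}

/-- The parent of a vertex (root `v_l`). -/
def par : DSVert s L R → DSVert s L R
  | Sum.inl a => Sum.inl ⟨(a : ℕ) - 1, by omega⟩
  | Sum.inr (Sum.inl ⟨i, j⟩) =>
      if (j : ℕ) = 0 then Sum.inl 0 else Sum.inr (Sum.inl ⟨i, ⟨(j : ℕ) - 1, by omega⟩⟩)
  | Sum.inr (Sum.inr ⟨_, _⟩) => Sum.inl (Fin.last s)

/-- The depth of a vertex. -/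
def dep : DSVert s L R → ℕ
  | Sum.inl a => a
  | Sum.inr (Sum.inl ⟨_, j⟩) => (j : ℕ) + 1
  | Sum.inr (Sum.inr ⟨_, _⟩) => s + 1

theorem ds_treeLike (hone : ∀ ℓ ∈ R, ℓ = 1) :
    TreeLike (DoubleSpider s L R) (vL s L R) par dep := by
  have h1 : ∀ i : Fin R.length, R.get i = 1 := fun i => hone _ (List.get_mem R i)
  constructor
  · rintro (a | ⟨i, j⟩ | ⟨i, j⟩) hx
    · have : (a : ℕ) ≠ 0 := by
        intro h; apply hx; simp [vL, Fin.ext_iff, -Fin.val_eq_zero_iff, h]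
      simp only [par, dep]; omega
    · simp only [par]
      split_ifs with h
      · simp [dep]
      · simp only [dep]; omega
    · simp [par, dep]
  · rintro (a | ⟨i, j⟩ | ⟨i, j⟩) (b | ⟨k, l⟩ | ⟨k, l⟩)
    · simp [DoubleSpider, SimpleGraph.fromRel_adj, par, vL, Fin.ext_iff, -Fin.val_eq_zero_iff]
      omega
    · simp only [DoubleSpider, SimpleGraph.fromRel_adj, par, vL]
      split_ifs with h <;> simp [Fin.ext_iff, -Fin.val_eq_zero_iff, h] <;> omega
    · have := h1 k
      have hl : (l : ℕ) = 0 := by have := l.2; omega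
      simp [DoubleSpider, SimpleGraph.fromRel_adj, par, vL, Fin.ext_iff, -Fin.val_eq_zero_iff, hl]
      omega
    · simp only [DoubleSpider, SimpleGraph.fromRel_adj, par, vL]
      split_ifs with h <;> simp [Fin.ext_iff, -Fin.val_eq_zero_iff, h] <;> omega
    · simp only [DoubleSpider, SimpleGraph.fromRel_adj, par, vL]
      by_cases e : i = k
      · subst e
        split_ifs with h h' <;> simp [Fin.ext_iff, -Fin.val_eq_zero_iff, *] <;> omega
      · have e' : ¬ k = i := fun h => e h.symm
        split_ifs with h h' <;> simp [e, e'] 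
    · simp [DoubleSpider, SimpleGraph.fromRel_adj, par, vL]
      split_ifs <;> simp
    · have := h1 i
      have hl : (j : ℕ) = 0 := by have := j.2; omega
      simp [DoubleSpider, SimpleGraph.fromRel_adj, par, vL, Fin.ext_iff, -Fin.val_eq_zero_iff, hl]
      omega
    · simp [DoubleSpider, SimpleGraph.fromRel_adj, par, vL]
      split_ifs <;> simp
    · have := h1 i
      have hj : (j : ℕ) = 0 := by have := j.2; omega
      have := h1 k
      have hl : (l : ℕ) = 0 := by have := l.2; omega
      simp [DoubleSpider, SimpleGraph.fromRel_adj, par, vL, hj, hl]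

/-- The set of (children of) edges incident to `u`. -/
def inc (u : DSVert s L R) : Finset (DSVert s L R) :=
  Finset.univ.filter (fun x => x ≠ vL s L R ∧ (x = u ∨ par x = u))

theorem mem_inc {u x : DSVert s L R} : x ∈ inc u ↔ x ≠ vL s L R ∧ (x = u ∨ par x = u) := by
  unfold inc
  rw [Finset.mem_filter]
  simp only [Finset.mem_univ, true_and]

/-- first vertex of a leg in `L` -/
def lgp (hL : ∀ ℓ ∈ L, 1 ≤ ℓ) (i : Fin L.length) : DSVert s L R :=
  Sum.inr (Sum.inl ⟨i, ⟨0, hL _ (List.get_mem L i)⟩⟩)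

/-- pendant vertex of a leg in `R` -/
def rp (hR : ∀ ℓ ∈ R, 1 ≤ ℓ) (i : Fin R.length) : DSVert s L R :=
  Sum.inr (Sum.inr ⟨i, ⟨0, hR _ (List.get_mem R i)⟩⟩)

/-- first core vertex -/
def c1 (hs : 1 ≤ s) : DSVert s L R := Sum.inl ⟨1, by omega⟩

theorem rp_surj (hR : ∀ ℓ ∈ R, 1 ≤ ℓ) (hone : ∀ ℓ ∈ R, ℓ = 1) (p : (i : Fin R.length) × Fin (R.get i)) :
    (Sum.inr (Sum.inr p) : DSVert s L R) = rp hR p.1 := by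
  obtain ⟨i, j⟩ := p
  have : R.get i = 1 := hone _ (List.get_mem R i)
  have hj : (j : ℕ) = 0 := by have := j.2; omega
  simp [rp, Fin.ext_iff, -Fin.val_eq_zero_iff, hj]

theorem inc_core (a : Fin (s + 1)) (h0 : 0 < (a : ℕ)) (h1 : (a : ℕ) < s) :
    inc (Sum.inl a : DSVert s L R) = {Sum.inl a, Sum.inl ⟨(a : ℕ) + 1, by omega⟩} := by
  ext x
  rcases x with (b | ⟨i, j⟩ | ⟨i, j⟩)
  · simp [mem_inc, par, vL, Fin.ext_iff, -Fin.val_eq_zero_iff]; omega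
  · simp only [mem_inc, par, vL]
    split_ifs <;> simp [Fin.ext_iff, -Fin.val_eq_zero_iff]; omega
  · simp [mem_inc, par, vL, Fin.ext_iff, -Fin.val_eq_zero_iff]; omega

theorem inc_leg (i : Fin L.length) (j : Fin (L.get i)) (h1 : (j : ℕ) + 1 < L.get i) :
    inc (Sum.inr (Sum.inl ⟨i, j⟩) : DSVert s L R) =
      {Sum.inr (Sum.inl ⟨i, j⟩), Sum.inr (Sum.inl ⟨i, ⟨(j : ℕ) + 1, h1⟩⟩)} := by
  ext x
  rcases x with (b | ⟨k, l⟩ | ⟨k, l⟩)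
  · simp [mem_inc, par, vL, Fin.ext_iff, -Fin.val_eq_zero_iff]
  · by_cases e : i = k
    · subst e
      simp only [mem_inc, par, vL]
      split_ifs with h <;> simp [Fin.ext_iff, -Fin.val_eq_zero_iff] <;> omega
    · have e' : ¬ k = i := fun h => e h.symm
      simp only [mem_inc, par, vL]
      split_ifs with h <;> simp [e, e']
  · simp [mem_inc, par, vL]

theorem inc_leaf (i : Fin L.length) (j : Fin (L.get i)) (h1 : (j : ℕ) + 1 = L.get i) :
    inc (Sum.inr (Sum.inl ⟨i, j⟩) : DSVert s L R) = {Sum.inr (Sum.inl ⟨i, j⟩)} := by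
  ext x
  rcases x with (b | ⟨k, l⟩ | ⟨k, l⟩)
  · simp [mem_inc, par, vL, Fin.ext_iff, -Fin.val_eq_zero_iff]
  · by_cases e : i = k
    · subst e
      have := l.2
      simp only [mem_inc, par, vL]
      split_ifs with h <;> simp [Fin.ext_iff, -Fin.val_eq_zero_iff] <;> omega
    · have e' : ¬ k = i := fun h => e h.symm
      simp only [mem_inc, par, vL]
      split_ifs with h <;> simp [e, e']
  · simp [mem_inc, par, vL]

theorem inc_pend (p : (i : Fin R.length) × Fin (R.get i)) :
    inc (Sum.inr (Sum.inr p) : DSVert s L R) = {Sum.inr (Sum.inr p)} := by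
  ext x
  rcases x with (b | ⟨k, l⟩ | ⟨k, l⟩)
  · simp [mem_inc, par, vL, Fin.ext_iff, -Fin.val_eq_zero_iff]
  · simp only [mem_inc, par, vL]
    split_ifs with h <;> simp
  · simp [mem_inc, par, vL]

theorem inc_vR (hs : 1 ≤ s) (hR : ∀ ℓ ∈ R, 1 ≤ ℓ) (hone : ∀ ℓ ∈ R, ℓ = 1) :
    inc (vR s L R) = insert (vR s L R) (Finset.univ.image (rp hR)) := by
  ext x
  rcases x with (b | ⟨k, l⟩ | p)
  · simp [mem_inc, par, vL, vR, rp, Fin.ext_iff, -Fin.val_eq_zero_iff]; omega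
  · simp only [mem_inc, par, vL, vR, Finset.mem_insert, Finset.mem_image]
    split_ifs with h <;> simp [rp, Fin.ext_iff, -Fin.val_eq_zero_iff]; omega
  · have : (Sum.inr (Sum.inr p) : DSVert s L R) ∈ Finset.univ.image (rp (s := s) (L := L) hR) := by
      rw [rp_surj hR hone]; simp
    simp [this, mem_inc, par, vL, vR]

theorem inc_vL (hs : 1 ≤ s) (hL : ∀ ℓ ∈ L, 1 ≤ ℓ) :
    inc (vL s L R) = insert (c1 hs) (Finset.univ.image (lgp hL)) := by
  ext x
  rcases x with (b | ⟨k, l⟩ | p)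
  · simp [mem_inc, par, vL, vR, lgp, c1, Fin.ext_iff, -Fin.val_eq_zero_iff]; omega
  · simp only [mem_inc, par, vL, c1, Finset.mem_insert, Finset.mem_image, Finset.mem_univ, true_and]
    split_ifs with h
    · simp only [ne_eq, reduceCtorEq, not_false_eq_true, or_true, and_self, false_or, true_iff]
      refine ⟨k, ?_⟩
      simp [lgp, Fin.ext_iff, -Fin.val_eq_zero_iff, h]
    · simp only [ne_eq, reduceCtorEq, not_false_eq_true, or_self, and_false, false_or, false_iff]
      rintro ⟨x, hx⟩
      simp only [lgp, Sum.inr.injEq, Sum.inl.injEq, Sigma.mk.injEq] at hx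
      obtain ⟨rfl, hx⟩ := hx
      have := eq_of_heq hx
      rw [← this] at h
      exact h rfl
  · simp [mem_inc, par, vL, lgp, c1, Fin.ext_iff, -Fin.val_eq_zero_iff]; omega

theorem lgp_inj (hL : ∀ ℓ ∈ L, 1 ≤ ℓ) : Function.Injective (lgp (s := s) (R := R) hL) := by
  intro i j h
  simp [lgp] at h
  exact h.1

theorem rp_inj (hR : ∀ ℓ ∈ R, 1 ≤ ℓ) : Function.Injective (rp (s := s) (L := L) hR) := by
  intro i j h
  simp [rp] at h
  exact h.1

theorem sum_vR (hs : 1 ≤ s) (hR : ∀ ℓ ∈ R, 1 ≤ ℓ) (hone : ∀ ℓ ∈ R, ℓ = 1) (g : DSVert s L R → ℕ) :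
    ∑ x ∈ inc (vR s L R), g x = g (vR s L R) + ∑ i, g (rp hR i) := by
  rw [inc_vR hs hR hone, Finset.sum_insert, Finset.sum_image]
  · intro i _ j _ h; exact rp_inj hR h
  · simp [vR, rp]

theorem sum_vL (hs : 1 ≤ s) (hL : ∀ ℓ ∈ L, 1 ≤ ℓ) (g : DSVert s L R → ℕ) :
    ∑ x ∈ inc (vL s L R), g x = g (c1 hs) + ∑ i, g (lgp hL i) := by
  rw [inc_vL hs hL, Finset.sum_insert, Finset.sum_image]
  · intro i _ j _ h; exact lgp_inj hL h
  · simp [c1, lgp]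

end DS


section Scheme
variable {s : ℕ} {L R : List ℕ}

/-- The class of an edge (identified with its lower end). -/
def cls (top : Fin L.length → Prop) (cc : ℕ → ℕ) (rl : ℕ) : DSVert s L R → ℕ
  | Sum.inl a => if (a : ℕ) = 0 then 6 else cc a
  | Sum.inr (Sum.inl ⟨i, j⟩) =>
      if L.get i = 1 then 2 else if (j : ℕ) = 0 ∧ top i then 5
      else if (L.get i - 1 - (j : ℕ)) % 2 = 0 then 0 else 4
  | Sum.inr (Sum.inr ⟨i, _⟩) => if (i : ℕ) + 1 = R.length then rl else 1

/-- The time of an edge. -/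
def tau : DSVert s L R → ℕ
  | Sum.inl a => (L.sum + 1) * L.length + a
  | Sum.inr (Sum.inl ⟨i, j⟩) => (L.sum + 1) * (i : ℕ) + (L.get i - 1 - (j : ℕ))
  | Sum.inr (Sum.inr ⟨i, _⟩) => i

structure Good_s6 (s : ℕ) (L : List ℕ) (top : Fin L.length → Prop) (cc : ℕ → ℕ) (rl : ℕ) : Prop where
  htop : ∀ i, top i → L.get i % 2 = 1 ∧ L.get i ≠ 1
  hcc : ∀ a, 1 ≤ a → a ≤ s → cc a = 0 ∨ cc a = 4 ∨ cc a = 5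
  hlink : ∀ a, 1 ≤ a → a < s → (cc a = 0 ∧ cc (a + 1) = 4) ∨ (cc a = 4 ∧ cc (a + 1) = 0) ∨
    (cc a = 4 ∧ cc (a + 1) = 5)
  hrl : rl = 1 ∨ rl = 3

variable {top : Fin L.length → Prop} {cc : ℕ → ℕ} {rl : ℕ}

theorem blk {B i i' p p' : ℕ} (hp : p < B) (hp' : p' < B) (h : B * i + p = B * i' + p') : i = i' := by
  rcases lt_trichotomy i i' with h1 | h1 | h1
  · have := Nat.mul_le_mul_left B (show i + 1 ≤ i' from h1)
    rw [Nat.mul_add] at this; omega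
  · exact h1
  · have := Nat.mul_le_mul_left B (show i' + 1 ≤ i from h1)
    rw [Nat.mul_add] at this; omega

theorem get_lt (i : Fin L.length) : L.get i < L.sum + 1 := by
  have := List.le_sum_of_mem (List.get_mem L i)
  omega

theorem leg_lt_core (i : Fin L.length) (j : Fin (L.get i)) (a : ℕ) :
    (L.sum + 1) * (i : ℕ) + (L.get i - 1 - (j : ℕ)) < (L.sum + 1) * L.length + a := by
  have h1 := get_lt i
  have := Nat.mul_le_mul_left (L.sum + 1) (show (i : ℕ) + 1 ≤ L.length from i.2)
  rw [Nat.mul_add] at this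
  omega

theorem tau_inj (hg : Good_s6 s L top cc rl) {x y : DSVert s L R}
    (hx : cls top cc rl x ≠ 1 ∧ cls top cc rl x ≠ 3)
    (hy : cls top cc rl y ≠ 1 ∧ cls top cc rl y ≠ 3) (h : tau x = tau y) : x = y := by
  rcases x with (a | ⟨i, j⟩ | ⟨i, j⟩)
  · rcases y with (b | ⟨k, l⟩ | ⟨k, l⟩)
    · simp only [tau] at h
      congr 1; ext; omega
    · simp only [tau] at h
      have := leg_lt_core k l a; omega
    · exfalso
      simp only [cls] at hy
      have := hg.hrl
      split_ifs at hy <;> omega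
  · rcases y with (b | ⟨k, l⟩ | ⟨k, l⟩)
    · simp only [tau] at h
      have := leg_lt_core i j b; omega
    · simp only [tau] at h
      have h1 := get_lt i
      have h2 := get_lt k
      have e : (i : ℕ) = k := blk (by omega) (by omega) h
      have e' : i = k := Fin.ext e
      subst e'
      have := j.2
      have := l.2
      have : j = l := by ext; omega
      rw [this]
    · exfalso
      simp only [cls] at hy
      have := hg.hrl
      split_ifs at hy <;> omega
  · exfalso
    simp only [cls] at hx
    have := hg.hrl
    split_ifs at hx <;> omega

theorem cls_leg (i : Fin L.length) (j : Fin (L.get i)) :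
    cls (s := s) (R := R) top cc rl (Sum.inr (Sum.inl ⟨i, j⟩)) = 0 ∨
    cls (s := s) (R := R) top cc rl (Sum.inr (Sum.inl ⟨i, j⟩)) = 2 ∨
    cls (s := s) (R := R) top cc rl (Sum.inr (Sum.inl ⟨i, j⟩)) = 4 ∨
    cls (s := s) (R := R) top cc rl (Sum.inr (Sum.inl ⟨i, j⟩)) = 5 := by
  simp only [cls]
  split_ifs <;> omega

theorem cls_R (hg : Good_s6 s L top cc rl) {x : DSVert s L R}
    (hx : cls top cc rl x = 1 ∨ cls top cc rl x = 3) : ∃ p, x = Sum.inr (Sum.inr p) := by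
  rcases x with (a | ⟨i, j⟩ | p)
  · exfalso
    have h1 := hg.hcc a
    have := a.2
    simp only [cls] at hx
    split_ifs at hx <;> omega
  · exfalso
    have := cls_leg (s := s) (R := R) (top := top) (cc := cc) (rl := rl) i j
    omega
  · exact ⟨p, rfl⟩

theorem key_inj (hg : Good_s6 s L top cc rl) (hR : ∀ ℓ ∈ R, 1 ≤ ℓ) (hone : ∀ ℓ ∈ R, ℓ = 1)
    (x y : DSVert s L R) (h : cls top cc rl x = cls top cc rl y) (ht : tau x = tau y) : x = y := by
  by_cases hx : cls top cc rl x = 1 ∨ cls top cc rl x = 3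
  · obtain ⟨p, rfl⟩ := cls_R hg hx
    rw [h] at hx
    obtain ⟨q, rfl⟩ := cls_R hg hx
    rw [rp_surj hR hone, rp_surj hR hone] at *
    simp only [rp, tau] at ht
    rw [show p.1 = q.1 from Fin.ext ht]
  · refine tau_inj hg ?_ ?_ ht <;> omega

theorem cls_root (hg : Good_s6 s L top cc rl) (x : DSVert s L R) (hx : x ≠ vL s L R) :
    cls top cc rl x < cls top cc rl (vL s L R) := by
  have h6 : cls (R := R) top cc rl (vL s L R) = 6 := by simp [cls, vL]
  rw [h6]
  rcases x with (a | ⟨i, j⟩ | ⟨i, j⟩)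
  · have h1 := hg.hcc a
    have := a.2
    have h0 : (a : ℕ) ≠ 0 := by
      intro h; apply hx; simp only [vL]; congr 1; ext; simpa using h
    simp only [cls]
    rw [if_neg h0]; omega
  · simp only [cls]
    split_ifs <;> omega
  · simp only [cls]
    have := hg.hrl
    split_ifs <;> omega

/-- recovers the vertex of degree two from the first edge of its link -/
def lk : DSVert s L R → DSVert s L R
  | Sum.inl a => Sum.inl a
  | Sum.inr x => par (Sum.inr x)

theorem kinds (hg : Good_s6 s L top cc rl) (hs : 1 ≤ s) (u : DSVert s L R) :
    (u = vL s L R) ∨ (u = vR s L R) ∨ (inc u = {u} ∧ cls top cc rl u ≤ 3) ∨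
    (∃ x y : DSVert s L R, x ≠ y ∧ inc u = {x, y} ∧ IsLink (cls top cc rl) tau x y ∧ u = lk x) := by
  rcases u with (a | ⟨i, j⟩ | p)
  · by_cases h0 : (a : ℕ) = 0
    · left; simp only [vL]; congr 1; ext; simpa using h0
    by_cases h1 : (a : ℕ) = s
    · right; left; simp only [vR]; congr 1; ext; simpa using h1
    right; right; right
    have h2 : (a : ℕ) < s := by have := a.2; omega
    refine ⟨Sum.inl a, Sum.inl ⟨(a : ℕ) + 1, by omega⟩, ?_, inc_core a (by omega) h2, ⟨?_, ?_⟩, rfl⟩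
    · simp [Fin.ext_iff, -Fin.val_eq_zero_iff]
    · simp only [tau]; omega
    · have := hg.hlink a (by omega) h2
      simp only [cls, if_neg h0]
      simpa using this
  · right; right
    have hj := j.2
    by_cases h1 : (j : ℕ) + 1 = L.get i
    · left
      refine ⟨inc_leaf i j h1, ?_⟩
      have ht := hg.htop i
      simp only [cls]
      split_ifs with h2 h3 h4
      · omega
      · have := ht h3.2; omega
      · omega
      · omega
    · right
      have h2 : (j : ℕ) + 1 < L.get i := by omega
      refine ⟨Sum.inr (Sum.inl ⟨i, ⟨(j : ℕ) + 1, h2⟩⟩), Sum.inr (Sum.inl ⟨i, j⟩), ?_, ?_, ⟨?_, ?_⟩, ?_⟩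
      · simp [Fin.ext_iff, -Fin.val_eq_zero_iff]
      · rw [inc_leg i j h2, Finset.pair_comm]
      · simp only [tau]; omega
      · have h3 : L.get i ≠ 1 := by omega
        by_cases hti : top i
        · have ht := hg.htop i hti
          simp only [cls, hti, and_true, if_neg h3]
          by_cases hj0 : (j : ℕ) = 0
          · rw [if_neg (by omega), if_neg (by omega), if_pos hj0]; omega
          · rw [if_neg (by omega), if_neg hj0]
            split_ifs <;> omega
        · simp only [cls, hti, and_false, if_false, if_neg h3]
          split_ifs <;> omega
      · simp [lk, par]
  · right; right; left
    refine ⟨inc_pend p, ?_⟩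
    have := hg.hrl
    simp only [cls]
    split_ifs <;> omega

theorem reduction (hg : Good_s6 s L top cc rl) (hs : 1 ≤ s)
    (hL : ∀ ℓ ∈ L, 1 ≤ ℓ) (hR : ∀ ℓ ∈ R, 1 ≤ ℓ) (hone : ∀ ℓ ∈ R, ℓ = 1)
    (hb : 2 ≤ R.length) (hab : R.length < L.length)
    (hVR0 : cnt (cls (s := s) (R := R) top cc rl) 3 <
        rk (cls top cc rl) tau (vR s L R) + ∑ i, rk (cls top cc rl) tau (rp (s := s) (L := L) hR i))
    (hVR : ∀ x y : DSVert s L R, IsLink (cls top cc rl) tau x y →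
      rk (cls top cc rl) tau x + rk (cls top cc rl) tau y <
        rk (cls top cc rl) tau (vR s L R) + ∑ i, rk (cls top cc rl) tau (rp (s := s) (L := L) hR i))
    (hVL : rk (cls top cc rl) tau (vR s L R) +
        ∑ i, rk (cls top cc rl) tau (rp (s := s) (L := L) hR i) <
      rk (cls top cc rl) tau (c1 (L := L) (R := R) hs) +
        ∑ i, rk (cls top cc rl) tau (lgp (s := s) (R := R) hL i)) :
    IsStronglyAntimagic (DoubleSpider s L R) := by
  have hT := ds_treeLike (s := s) (L := L) (R := R) hone
  set g := rk (cls (s := s) (R := R) top cc rl) tau with hgdef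
  obtain ⟨f, hf, hsum⟩ := hT.labeling' g (rk_bijOn (key_inj hg hR hone) _ (cls_root hg))
  have hS : ∀ u, vertexSum (DoubleSpider s L R) f u = ∑ x ∈ inc u, g x :=
    fun u => hsum u (inc u) (fun x => mem_inc)
  have hD : ∀ u, (DoubleSpider s L R).degree u = ∑ x ∈ inc u, 1 := by
    intro u
    rw [hT.degree_eq' u (inc u) (fun x => mem_inc), Finset.card_eq_sum_ones]
  have hSR := hS (vR s L R)
  rw [sum_vR hs hR hone] at hSR
  have hSL := hS (vL s L R)
  rw [sum_vL hs hL] at hSL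
  have hDR := hD (vR s L R)
  rw [sum_vR hs hR hone (fun _ => 1)] at hDR
  have hDL := hD (vL s L R)
  rw [sum_vL hs hL (fun _ => 1)] at hDL
  simp only [Finset.sum_const, Finset.card_univ, Fintype.card_fin, smul_eq_mul, mul_one] at hDR hDL
  -- numerical kinds
  have key : ∀ u, (u = vL s L R) ∨ (u = vR s L R) ∨
      (vertexSum (DoubleSpider s L R) f u = g u ∧ (DoubleSpider s L R).degree u = 1 ∧
        g u ≤ cnt (cls (s := s) (R := R) top cc rl) 3) ∨
      (∃ x y : DSVert s L R, vertexSum (DoubleSpider s L R) f u = g x + g y ∧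
        (DoubleSpider s L R).degree u = 2 ∧
        IsLink (cls top cc rl) tau x y ∧ u = lk x) := by
    intro u
    rcases kinds (R := R) hg hs u with h | h | h | ⟨x, y, hxy, h, h', h''⟩
    · exact Or.inl h
    · exact Or.inr (Or.inl h)
    · right; right; left
      rw [hS, hD, h.1]
      simp only [Finset.sum_singleton, true_and]
      exact rk_le_cnt h.2
    · right; right; right
      refine ⟨x, y, ?_, ?_, h', h''⟩
      · rw [hS, h, Finset.sum_pair hxy]
      · rw [hD, h, Finset.sum_pair hxy]
  have hinj : Function.Injective g := rk_injective (key_inj hg hR hone)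
  have hlink : ∀ x y : DSVert s L R, IsLink (cls top cc rl) tau x y →
      cnt (cls (s := s) (R := R) top cc rl) 3 + 1 < g x + g y := fun x y h => link_gt h
  have hstrong : ∀ u v, (DoubleSpider s L R).degree u < (DoubleSpider s L R).degree v →
      vertexSum (DoubleSpider s L R) f u < vertexSum (DoubleSpider s L R) f v := by
    intro u v huv
    rcases key u with rfl | rfl | ⟨h1, h2, h3⟩ | ⟨x, y, h1, h2, h3, h4⟩ <;>
    rcases key v with rfl | rfl | ⟨h1', h2', h3'⟩ | ⟨x', y', h1', h2', h3', h4'⟩ <;>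
    try have q1 := hlink _ _ h3
    all_goals try have q2 := hlink _ _ h3'
    all_goals try have q3 := hVR _ _ h3
    all_goals try have q4 := hVR _ _ h3'
    all_goals omega
  refine ⟨f, hf, ?_, hstrong⟩
  intro u v huv
  have hdeg : (DoubleSpider s L R).degree u = (DoubleSpider s L R).degree v := by
    rcases lt_trichotomy ((DoubleSpider s L R).degree u) ((DoubleSpider s L R).degree v) with h | h | h
    · have := hstrong _ _ h; omega
    · exact h
    · have := hstrong _ _ h; omega
  rcases key u with rfl | rfl | ⟨h1, h2, h3⟩ | ⟨x, y, h1, h2, h3, h4⟩ <;>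
  rcases key v with rfl | rfl | ⟨h1', h2', h3'⟩ | ⟨x', y', h1', h2', h3', h4'⟩
  all_goals first
    | rfl
    | (exfalso; omega)
    | (exact hinj (by omega))
    | skip
  rw [h4, h4']
  congr 1
  by_contra hne
  have hx : tau x ≠ tau x' := by
    intro ht
    refine hne (tau_inj hg ?_ ?_ ht)
    · obtain ⟨-, h⟩ := h3; omega
    · obtain ⟨-, h⟩ := h3'; omega
  exact link_ne h3 h3' hx (by rw [← h1, ← h1', huv])

end Scheme


section Bounds
variable {s : ℕ} {L R : List ℕ} {top : Fin L.length → Prop} {cc : ℕ → ℕ} {rl : ℕ}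
  {C : DSVert s L R → ℕ}

theorem cls_vR (hC : C = cls top cc rl) (hs : 1 ≤ s) : C (vR s L R) = cc s := by
  subst hC
  simp only [cls, vR, Fin.val_last]
  rw [if_neg (by omega)]

theorem cls_c1 (hC : C = cls top cc rl) (hs : 1 ≤ s) : C (c1 hs) = cc 1 := by
  subst hC
  simp [cls, c1]

theorem cls_core (hC : C = cls top cc rl) (a : Fin (s + 1)) :
    C (Sum.inl a) = if (a : ℕ) = 0 then 6 else cc a := by
  subst hC
  rfl

theorem cls_rp (hC : C = cls top cc rl) (hR : ∀ ℓ ∈ R, 1 ≤ ℓ) (i : Fin R.length) :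
    C (rp hR i) = if (i : ℕ) + 1 = R.length then rl else 1 := by
  subst hC
  rfl

theorem cls_lgp (hC : C = cls top cc rl) (hL : ∀ ℓ ∈ L, 1 ≤ ℓ) (i : Fin L.length) :
    C (lgp hL i) = if L.get i = 1 then 2 else if top i then 5
      else if (L.get i - 1) % 2 = 0 then 0 else 4 := by
  subst hC
  simp [cls, lgp]

theorem tau_le_vR (z : DSVert s L R) (hz : ∀ p, z ≠ Sum.inr (Sum.inr p)) :
    tau z ≤ tau (vR s L R) := by
  rcases z with (a | ⟨i, j⟩ | p)
  · simp only [tau, vR, Fin.val_last]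
    have := a.2; omega
  · have := leg_lt_core i j s
    simp only [tau, vR, Fin.val_last]
    omega
  · exact absurd rfl (hz p)

theorem tau_le_vR' (hg : Good_s6 s L top cc rl) (hC : C = cls top cc rl) (z : DSVert s L R)
    (hz : C z = 0 ∨ C z = 4 ∨ C z = 5) : tau z ≤ tau (vR s L R) := by
  apply tau_le_vR
  rintro p rfl
  subst hC
  have h1 := hg.hrl
  have h2 : cls (s := s) (L := L) top cc rl (Sum.inr (Sum.inr p)) = 1 ∨
      cls (s := s) (L := L) top cc rl (Sum.inr (Sum.inr p)) = 3 := by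
    simp only [cls]
    split_ifs <;> omega
  omega

/-- the last pendant vertex at `v_r` -/
theorem cnt3_le_last (hg : Good_s6 s L top cc 3) (hC : C = cls top cc 3) (hR : ∀ ℓ ∈ R, 1 ≤ ℓ)
    (hone : ∀ ℓ ∈ R, ℓ = 1) (i : Fin R.length) (hi : (i : ℕ) + 1 = R.length) :
    cnt C 3 ≤ rk C tau (rp hR i) := by
  have hx := cls_rp hC hR i
  rw [if_pos hi] at hx
  apply Finset.card_le_card
  intro z hz
  simp only [Finset.mem_filter, Finset.mem_univ, true_and] at hz ⊢
  simp only [keyLE]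
  rw [hx]
  rcases Nat.lt_or_ge (C z) 3 with h | h
  · exact Or.inl h
  right
  refine ⟨by omega, ?_⟩
  have h3 : C z = 1 ∨ C z = 3 := by omega
  rw [hC] at h3
  obtain ⟨p, rfl⟩ := cls_R hg h3
  obtain ⟨k, l⟩ := p
  have := k.2
  simp only [tau, rp]
  omega

theorem sumR_ge (hg : Good_s6 s L top cc 3) (hC : C = cls top cc 3) (hR : ∀ ℓ ∈ R, 1 ≤ ℓ)
    (hone : ∀ ℓ ∈ R, ℓ = 1) (hb : 2 ≤ R.length) :
    cnt C 3 + cnt C 0 + 1 ≤ ∑ i, rk C tau (rp (s := s) (L := L) hR i) := by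
  have h1 := cnt3_le_last hg hC hR hone ⟨R.length - 1, by omega⟩ (by simp; omega)
  have h2 : cnt C 0 < rk C tau (rp hR ⟨0, by omega⟩) := by
    apply cnt_lt_rk
    rw [cls_rp hC, if_neg (by simp; omega)]
    omega
  have h3 : ∑ i ∈ ({⟨R.length - 1, by omega⟩, ⟨0, by omega⟩} : Finset (Fin R.length)),
      rk C tau (rp (s := s) (L := L) hR i) ≤ ∑ i, rk C tau (rp (s := s) (L := L) hR i) :=
    Finset.sum_le_sum_of_subset (Finset.subset_univ _)
  rw [Finset.sum_pair (by simp [Fin.ext_iff, -Fin.val_eq_zero_iff]; omega)] at h3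
  omega

theorem sum_fin_le {n : ℕ} (f : Fin n → ℕ) (i : Fin n) (A K : ℕ) (h1 : f i ≤ A)
    (h2 : ∀ k, k ≠ i → f k ≤ K) : ∑ k, f k ≤ A + (n - 1) * K := by
  rw [← Finset.add_sum_erase _ _ (Finset.mem_univ i)]
  have := Finset.sum_le_card_nsmul (Finset.univ.erase i) f K
    (fun k hk => h2 k (Finset.ne_of_mem_erase hk))
  simp at this
  have : ∑ x ∈ Finset.univ.erase i, f x ≤ (n - 1) * K := this
  omega

theorem sum_fin_ge {n : ℕ} (f : Fin n → ℕ) (i : Fin n) (K : ℕ)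
    (h2 : ∀ k, k ≠ i → K ≤ f k) : f i + (n - 1) * K ≤ ∑ k, f k := by
  rw [← Finset.add_sum_erase _ _ (Finset.mem_univ i)]
  have := Finset.card_nsmul_le_sum (Finset.univ.erase i) f K
    (fun k hk => h2 k (Finset.ne_of_mem_erase hk))
  simp at this
  have : (n - 1) * K ≤ ∑ x ∈ Finset.univ.erase i, f x := this
  omega

theorem sum_fin_ge2 {n : ℕ} (f : Fin n → ℕ) (i j : Fin n) (hij : i ≠ j) (K : ℕ)
    (h2 : ∀ k, k ≠ i → k ≠ j → K ≤ f k) : f i + f j + (n - 2) * K ≤ ∑ k, f k := by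
  have hj : j ∈ Finset.univ.erase i := by simp [hij.symm]
  rw [← Finset.add_sum_erase _ _ (Finset.mem_univ i), ← Finset.add_sum_erase _ _ hj]
  have := Finset.card_nsmul_le_sum ((Finset.univ.erase i).erase j) f K
    (fun k hk => h2 k (Finset.ne_of_mem_erase (Finset.mem_of_mem_erase hk))
      (Finset.ne_of_mem_erase hk))
  rw [Finset.card_erase_of_mem hj, Finset.card_erase_of_mem (Finset.mem_univ i)] at this
  simp [Nat.sub_sub] at this
  have : (n - 2) * K ≤ ∑ x ∈ (Finset.univ.erase i).erase j, f x := this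
  omega

theorem sumR_le (hC : C = cls top cc 3) (hR : ∀ ℓ ∈ R, 1 ≤ ℓ) (hb : 2 ≤ R.length) :
    ∑ i, rk C tau (rp (s := s) (L := L) hR i) ≤ cnt C 3 + (R.length - 1) * cnt C 1 := by
  apply sum_fin_le _ ⟨R.length - 1, by omega⟩
  · apply rk_le_cnt
    rw [cls_rp hC, if_pos (by simp; omega)]
  · intro k hk
    apply rk_le_cnt
    rw [cls_rp hC, if_neg]
    intro h
    apply hk
    ext
    simp
    omega

theorem cnt_mono (c : DSVert s L R → ℕ) {k l : ℕ} (h : k ≤ l) : cnt c k ≤ cnt c l := by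
  apply Finset.card_le_card
  intro z hz
  simp only [Finset.mem_filter, Finset.mem_univ, true_and] at hz ⊢
  omega

/-- shift of the high edges -/
def shiftHigh (cm : Fin (s + 1) → DSVert s L R) : DSVert s L R → DSVert s L R
  | Sum.inl a => cm a
  | Sum.inr (Sum.inl ⟨i, j⟩) =>
      if h : (j : ℕ) + 1 < L.get i then Sum.inr (Sum.inl ⟨i, ⟨(j : ℕ) + 1, h⟩⟩)
      else Sum.inr (Sum.inl ⟨i, j⟩)
  | Sum.inr (Sum.inr p) => Sum.inr (Sum.inr p)

theorem leg_high (hC : C = cls top cc rl) (i : Fin L.length) (j : Fin (L.get i))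
    (h : C (Sum.inr (Sum.inl ⟨i, j⟩)) = 4) :
    ∃ h' : (j : ℕ) + 1 < L.get i, C (Sum.inr (Sum.inl ⟨i, ⟨(j : ℕ) + 1, h'⟩⟩)) = 0 := by
  subst hC
  have hj := j.2
  simp only [cls] at h
  by_cases h1 : L.get i = 1
  · rw [if_pos h1] at h; omega
  rw [if_neg h1] at h
  by_cases h2 : (j : ℕ) = 0 ∧ top i
  · rw [if_pos h2] at h; omega
  rw [if_neg h2] at h
  by_cases h3 : (L.get i - 1 - (j : ℕ)) % 2 = 0
  · rw [if_pos h3] at h; omega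
  have h' : (j : ℕ) + 1 < L.get i := by omega
  refine ⟨h', ?_⟩
  simp only [cls]
  rw [if_neg h1, if_neg (by omega), if_pos (by omega)]

theorem highs_le (hg : Good_s6 s L top cc rl) (hC : C = cls top cc rl)
    (cm : Fin (s + 1) → DSVert s L R)
    (h1 : ∀ a, C (Sum.inl a) = 4 → C (cm a) = 0)
    (h2 : ∀ a b, C (Sum.inl a) = 4 → C (Sum.inl b) = 4 → cm a = cm b → a = b)
    (h3 : ∀ a i j, C (Sum.inl a) = 4 → cm a = Sum.inr (Sum.inl ⟨i, j⟩) → (j : ℕ) = 0) :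
    cnt C 4 ≤ cnt C 3 + cnt C 0 := by
  have hnoR : ∀ p, C (Sum.inr (Sum.inr p)) ≠ 4 := by
    intro p
    have := hg.hrl
    subst hC
    simp only [cls]
    split_ifs <;> omega
  have e : (Finset.univ.filter (fun y => C y ≤ 4)) =
      (Finset.univ.filter (fun y => C y ≤ 3)) ∪ (Finset.univ.filter (fun y => C y = 4)) := by
    ext z
    simp only [Finset.mem_filter, Finset.mem_univ, true_and, Finset.mem_union]
    omega
  have h4 : cnt C 4 ≤ cnt C 3 + (Finset.univ.filter (fun y => C y = 4)).card := by
    unfold cnt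
    rw [e]
    exact Finset.card_union_le _ _
  have h5 : (Finset.univ.filter (fun y => C y = 4)).card ≤ cnt C 0 := by
    apply Finset.card_le_card_of_injOn (shiftHigh cm)
    · intro z hz
      simp only [Finset.coe_filter, Finset.mem_univ, true_and, Set.mem_ofPred_eq] at hz ⊢
      rcases z with (a | ⟨i, j⟩ | p)
      · simp only [shiftHigh]; rw [h1 a hz]
      · obtain ⟨h', h''⟩ := leg_high hC i j hz
        simp only [shiftHigh]
        rw [dif_pos h', h'']
      · exact absurd hz (hnoR p)
    · intro z hz w hw hzw
      simp only [Finset.coe_filter, Finset.mem_univ, true_and, Set.mem_ofPred_eq] at hz hw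
      rcases z with (a | ⟨i, j⟩ | p)
      · rcases w with (b | ⟨k, l⟩ | p)
        · rw [h2 a b hz hw hzw]
        · obtain ⟨h', h''⟩ := leg_high hC k l hw
          simp only [shiftHigh] at hzw
          rw [dif_pos h'] at hzw
          have := h3 a _ _ hz hzw
          simp at this
        · exact absurd hw (hnoR p)
      · obtain ⟨h', h''⟩ := leg_high hC i j hz
        rcases w with (b | ⟨k, l⟩ | p)
        · simp only [shiftHigh] at hzw
          rw [dif_pos h'] at hzw
          have := h3 b _ _ hw hzw.symm
          simp at this
        · obtain ⟨g', g''⟩ := leg_high hC k l hw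
          simp only [shiftHigh] at hzw
          rw [dif_pos h', dif_pos g'] at hzw
          simp only [Sum.inr.injEq, Sum.inl.injEq, Sigma.mk.injEq] at hzw
          obtain ⟨rfl, hx⟩ := hzw
          have := eq_of_heq hx
          simp only [Fin.mk.injEq] at this
          have : j = l := by ext; omega
          rw [this]
        · exact absurd hw (hnoR p)
      · exact absurd hz (hnoR p)
  omega

/-- `v_r` beats all vertices of degree two. -/
theorem vr_links (hg : Good_s6 s L top cc 3) (hC : C = cls top cc 3) (hR : ∀ ℓ ∈ R, 1 ≤ ℓ)
    (hone : ∀ ℓ ∈ R, ℓ = 1) (hb : 2 ≤ R.length) (hcnt : cnt C 4 ≤ cnt C 3 + cnt C 0)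
    (hle : ∀ z, C z = 0 ∨ C z = 5 → C z ≤ C (vR s L R)) (x y : DSVert s L R)
    (h : IsLink C tau x y) :
    rk C tau x + rk C tau y <
      rk C tau (vR s L R) + ∑ i, rk C tau (rp (s := s) (L := L) hR i) := by
  have hS := sumR_ge hg hC hR hone hb
  have h4 : ∀ z, C z = 4 → rk C tau z ≤ cnt C 4 := fun z hz => rk_le_cnt (by omega)
  have h0 : ∀ z, C z = 0 ∨ C z = 5 → rk C tau z ≤ rk C tau (vR s L R) := by
    intro z hz
    have := hle z hz
    have := tau_le_vR' hg hC z (by omega)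
    apply rk_le
    omega
  obtain ⟨-, h⟩ := h
  rcases h with h | h | h
  · have := h0 x (by omega); have := h4 y (by omega); omega
  · have := h0 y (by omega); have := h4 x (by omega); omega
  · have := h0 y (by omega); have := h4 x (by omega); omega

end Bounds


section Cases
variable {s : ℕ} {L R : List ℕ}

theorem num1 {b x K : ℕ} (hb : 1 ≤ b) (h : b ≤ x) : (b - 1) * K + K + b ≤ x * (K + 1) := by
  obtain ⟨n, rfl⟩ : ∃ n, b = n + 1 := ⟨b - 1, by omega⟩
  have := Nat.mul_le_mul_right (K + 1) h
  simp only [Nat.add_sub_cancel]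
  nlinarith

theorem num2 {b x K : ℕ} (h : b - 1 ≤ x) : (b - 1) * K + (b - 1) ≤ x * (K + 1) := by
  have := Nat.mul_le_mul_right (K + 1) h
  rw [Nat.mul_add, Nat.mul_one] at this
  exact this

theorem goodX (s : ℕ) (L : List ℕ) (rl : ℕ) (hrl : rl = 1 ∨ rl = 3) :
    Good_s6 s L (fun _ => False) (fun a => if a % 2 = 1 then 4 else 0) rl where
  htop := fun _ h => h.elim
  hcc := by intro a _ _; split_ifs <;> omega
  hlink := by intro a _ _; split_ifs <;> omega
  hrl := hrl

/-- No class 5 in scheme X. -/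
theorem no5X {C : DSVert s L R → ℕ} {rl : ℕ} (hrl : rl = 1 ∨ rl = 3)
    (hC : C = cls (fun _ => False) (fun a => if a % 2 = 1 then 4 else 0) rl)
    (z : DSVert s L R) : C z ≠ 5 := by
  subst hC
  rcases z with (a | ⟨i, j⟩ | p)
  · simp only [cls]; split_ifs <;> omega
  · simp only [cls, and_false, if_false]; split_ifs <;> omega
  · simp only [cls]; split_ifs <;> omega

theorem caseS1 (hs : 1 ≤ s) (hL : ∀ ℓ ∈ L, 1 ≤ ℓ) (hR : ∀ ℓ ∈ R, 1 ≤ ℓ)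
    (hone : ∀ ℓ ∈ R, ℓ = 1) (hb : 2 ≤ R.length) (hab : R.length < L.length)
    (heven : s % 2 = 0) (i0 : Fin L.length)
    (hO : ∀ i, i ≠ i0 → L.get i % 2 = 0 ∨ L.get i = 1) :
    IsStronglyAntimagic (DoubleSpider s L R) := by
  have hg := goodX s L 3 (Or.inr rfl)
  obtain ⟨C, hC⟩ : ∃ C : DSVert s L R → ℕ,
    C = cls (fun _ => False) (fun a => if a % 2 = 1 then 4 else 0) 3 := ⟨_, rfl⟩
  have hvR : C (vR s L R) = 0 := by
    rw [cls_vR hC hs, if_neg (by omega)]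
  have hc1 : C (c1 hs) = 4 := by
    rw [cls_c1 hC hs]; rfl
  have hcnt : cnt C 4 ≤ cnt C 3 + cnt C 0 := by
    have hcore : ∀ a : Fin (s + 1), C (Sum.inl a) = 4 → (a : ℕ) % 2 = 1 ∧ (a : ℕ) + 1 < s + 1 := by
      intro a ha
      have := a.2
      rw [cls_core hC] at ha
      split_ifs at ha <;> omega
    apply highs_le hg hC
      (fun a => if h : (a : ℕ) + 1 < s + 1 then Sum.inl ⟨(a : ℕ) + 1, h⟩ else Sum.inl a)
    · intro a ha
      have h1 := hcore a ha
      rw [dif_pos h1.2, cls_core hC, if_neg (by simp), if_neg (by simp; omega)]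
    · intro a b ha hb hab
      rw [dif_pos (hcore a ha).2, dif_pos (hcore b hb).2] at hab
      simp only [Sum.inl.injEq, Fin.mk.injEq] at hab
      ext; omega
    · intro a i j ha h
      rw [dif_pos (hcore a ha).2] at h
      simp at h
  have hSR := sumR_ge hg hC hR hone hb
  have hSR' := sumR_le hC hR hb
  have hleg : ∀ k, k ≠ i0 → cnt C 1 + 1 ≤ rk C tau (lgp hL k) := by
    intro k hk
    apply cnt_lt_rk
    have h1 := hO k hk
    have h2 := hL _ (List.get_mem L k)
    rw [cls_lgp hC]
    split_ifs <;> first | omega | simp_all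
  have hSL := sum_fin_ge (fun i => rk C tau (lgp hL i)) i0 (cnt C 1 + 1) hleg
  refine reduction hg hs hL hR hone hb hab ?_ ?_ ?_ <;> rw [← hC]
  · omega
  · intro x y hxy
    refine vr_links hg hC hR hone hb hcnt ?_ x y hxy
    intro z hz
    have := no5X (Or.inr rfl) hC z
    omega
  · have h1 : cnt C 3 < rk C tau (c1 hs) := cnt_lt_rk (by omega)
    have h2 : rk C tau (vR s L R) ≤ cnt C 0 := rk_le_cnt (by omega)
    have h3 := cnt_mono C (show 0 ≤ 1 by omega)
    have h4 := num1 (b := R.length) (x := L.length - 1) (K := cnt C 1) (by omega) (by omega)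
    omega

theorem caseS2 (hs : 1 ≤ s) (hL : ∀ ℓ ∈ L, 1 ≤ ℓ) (hR : ∀ ℓ ∈ R, 1 ≤ ℓ)
    (hone : ∀ ℓ ∈ R, ℓ = 1) (hb : 2 ≤ R.length) (hab : R.length < L.length)
    (hodd : s % 2 = 1)
    (hO : ∀ i : Fin L.length, L.get i % 2 = 0 ∨ L.get i = 1) :
    IsStronglyAntimagic (DoubleSpider s L R) := by
  have hg := goodX s L 1 (Or.inl rfl)
  obtain ⟨C, hC⟩ : ∃ C : DSVert s L R → ℕ,
    C = cls (fun _ => False) (fun a => if a % 2 = 1 then 4 else 0) 1 := ⟨_, rfl⟩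
  have hvR : C (vR s L R) = 4 := by
    rw [cls_vR hC hs, if_pos (by omega)]
  have hc1 : C (c1 hs) = 4 := by
    rw [cls_c1 hC hs]; rfl
  have hrp : ∀ i, C (rp hR i) = 1 := by
    intro i
    rw [cls_rp hC]; split_ifs <;> rfl
  have hleg : ∀ k : Fin L.length, cnt C 1 + 1 ≤ rk C tau (lgp hL k) := by
    intro k
    apply cnt_lt_rk
    have h1 := hO k
    have h2 := hL _ (List.get_mem L k)
    rw [cls_lgp hC]
    split_ifs <;> first | omega | simp_all
  have hSL := sum_fin_ge (fun i => rk C tau (lgp hL i)) ⟨0, by omega⟩ (cnt C 1 + 1)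
    (fun k _ => hleg k)
  have hl0 := hleg ⟨0, by omega⟩
  have hSR := sum_fin_le (fun i => rk C tau (rp (s := s) (L := L) hR i)) ⟨0, by omega⟩ (cnt C 1) (cnt C 1)
    (rk_le_cnt (by rw [hrp])) (fun k _ => rk_le_cnt (by rw [hrp]))
  have hSR0 : cnt C 0 < ∑ i, rk C tau (rp (s := s) (L := L) hR i) := by
    have h1 : cnt C 0 < rk C tau (rp (s := s) (L := L) hR ⟨0, by omega⟩) :=
      cnt_lt_rk (by rw [hrp]; omega)
    exact lt_of_lt_of_le h1 (Finset.single_le_sum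
      (f := fun i => rk C tau (rp (s := s) (L := L) hR i)) (fun _ _ => Nat.zero_le _)
      (Finset.mem_univ _))
  have hmid : rk C tau (vR s L R) ≤ rk C tau (c1 hs) + cnt C 0 := by
    have e : (Finset.univ.filter (fun y => keyLE C tau y (vR s L R))) ⊆
        (Finset.univ.filter (fun y => keyLE C tau y (c1 hs))) ∪
        (Finset.univ.filter (fun y => C y = 4 ∧ tau (c1 (L := L) (R := R) hs) < tau y)) := by
      intro z hz
      simp only [Finset.mem_filter, Finset.mem_univ, true_and, Finset.mem_union] at hz ⊢
      simp only [keyLE] at hz ⊢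
      omega
    have h1 := (Finset.card_le_card e).trans (Finset.card_union_le _ _)
    have h2 : (Finset.univ.filter
        (fun y => C y = 4 ∧ tau (c1 (L := L) (R := R) hs) < tau y)).card ≤ cnt C 0 := by
      have hz : ∀ z : DSVert s L R, C z = 4 ∧ tau (c1 (L := L) (R := R) hs) < tau z →
          ∃ a : Fin (s + 1), z = Sum.inl a ∧ (a : ℕ) % 2 = 1 ∧ 1 < (a : ℕ) := by
        rintro (a | ⟨i, j⟩ | p) ⟨h1, h2⟩
        · refine ⟨a, rfl, ?_⟩
          simp only [tau, c1] at h2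
          rw [cls_core hC] at h1
          split_ifs at h1 <;> omega
        · have := leg_lt_core i j 1
          simp only [tau, c1] at h2
          omega
        · rw [rp_surj hR hone, hrp] at h1
          omega
      apply Finset.card_le_card_of_injOn par
      · intro z h
        simp only [Finset.coe_filter, Finset.mem_univ, true_and, Set.mem_ofPred_eq] at h ⊢
        obtain ⟨a, rfl, h3, h4⟩ := hz z h
        simp only [par]
        rw [cls_core hC, if_neg (by simp; omega), if_neg (by simp; omega)]
      · intro z h w h' hzw
        simp only [Finset.coe_filter, Finset.mem_univ, true_and, Set.mem_ofPred_eq] at h h'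
        obtain ⟨a, rfl, h3, h4⟩ := hz z h
        obtain ⟨b, rfl, h5, h6⟩ := hz w h'
        simp only [par, Sum.inl.injEq, Fin.mk.injEq] at hzw
        congr 1; ext; omega
    unfold rk
    omega
  refine reduction hg hs hL hR hone hb hab ?_ ?_ ?_ <;> rw [← hC]
  · have : cnt C 3 < rk C tau (vR s L R) := cnt_lt_rk (by omega)
    omega
  · intro x y hxy
    have h0 : ∀ z, C z = 0 → rk C tau z ≤ cnt C 0 := fun z hz => rk_le_cnt (by omega)
    have h4 : ∀ z, C z = 4 → rk C tau z ≤ rk C tau (vR s L R) := by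
      intro z hz
      have := tau_le_vR' hg hC z (by omega)
      apply rk_le
      omega
    obtain ⟨-, h⟩ := hxy
    have := no5X (Or.inl rfl) hC y
    rcases h with h | h | h
    · have := h0 x (by omega); have := h4 y (by omega); omega
    · have := h0 y (by omega); have := h4 x (by omega); omega
    · omega
  · have h3 := cnt_mono C (show 0 ≤ 1 by omega)
    have h4 := num1 (b := R.length) (x := L.length - 1) (K := cnt C 1) (by omega) (by omega)
    omega

theorem goodY (s : ℕ) (L : List ℕ) (top : Fin L.length → Prop)
    (htop : ∀ i, top i → L.get i % 2 = 1 ∧ L.get i ≠ 1) :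
    Good_s6 s L top (fun a => if a = s then 5 else if (s - a) % 2 = 1 then 4 else 0) 3 where
  htop := htop
  hcc := by intro a _ _; split_ifs <;> omega
  hlink := by intro a _ _; split_ifs <;> omega
  hrl := Or.inr rfl

theorem lastTop {top : Fin L.length → Prop} {C : DSVert s L R → ℕ} (hs : 1 ≤ s)
    (hL : ∀ ℓ ∈ L, 1 ≤ ℓ)
    (htop : ∀ i, top i → L.get i % 2 = 1 ∧ L.get i ≠ 1)
    (hC : C = cls top (fun a => if a = s then 5 else if (s - a) % 2 = 1 then 4 else 0) 3)
    (hne : ∃ i, top i) :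
    ∃ i, top i ∧ rk C tau (vR s L R) ≤ rk C tau (lgp hL i) + 1 := by
  have hvR : C (vR s L R) = 5 := by
    rw [cls_vR hC hs, if_pos rfl]
  obtain ⟨k, hk⟩ := hne
  obtain ⟨i, hi, hmax⟩ := Finset.exists_max_image (Finset.univ.filter (fun i => top i))
    (fun i => (i : ℕ)) ⟨k, by rw [Finset.mem_filter]; exact ⟨Finset.mem_univ _, hk⟩⟩
  rw [Finset.mem_filter] at hi
  have hi := hi.2
  refine ⟨i, hi, ?_⟩
  have hCi : C (lgp hL i) = 5 := by
    rw [cls_lgp hC, if_neg (htop i hi).2, if_pos hi]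
  apply rk_le_succ
  intro z hz hkey
  rw [hvR] at hkey
  rw [hCi]
  by_cases h5 : C z = 5
  · right
    refine ⟨h5, ?_⟩
    rcases z with (a | ⟨i', j⟩ | ⟨i', j⟩)
    · exfalso
      apply hz
      have : (a : ℕ) = s := by
        rw [cls_core hC] at h5
        by_contra hne
        rw [if_neg hne] at h5
        split_ifs at h5 <;> omega
      simp only [vR]
      congr 1
      ext
      simpa using this
    · have h6 : (j : ℕ) = 0 ∧ top i' := by
        by_contra hne
        rw [hC] at h5
        simp only [cls] at h5
        rw [if_neg hne] at h5
        split_ifs at h5 <;> omega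
      have h7 := hmax i' (by rw [Finset.mem_filter]; exact ⟨Finset.mem_univ _, h6.2⟩)
      simp only [tau, lgp]
      by_cases e : i' = i
      · subst e; omega
      · have h8 : (i' : ℕ) + 1 ≤ i := by
          have : (i' : ℕ) ≠ i := fun h => e (Fin.ext h)
          omega
        have h9 := Nat.mul_le_mul_left (L.sum + 1) h8
        rw [Nat.mul_add] at h9
        have := get_lt i'
        omega
    · exfalso
      rw [hC] at h5
      simp only [cls] at h5
      split_ifs at h5 <;> omega
  · omega

theorem caseS4 (hs : 1 ≤ s) (hL : ∀ ℓ ∈ L, 1 ≤ ℓ) (hR : ∀ ℓ ∈ R, 1 ≤ ℓ)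
    (hone : ∀ ℓ ∈ R, ℓ = 1) (hb : 2 ≤ R.length) (hab : R.length < L.length)
    (heven : s % 2 = 0) (i0 k0 : Fin L.length) (hik : k0 ≠ i0)
    (hi0 : L.get i0 % 2 = 1 ∧ L.get i0 ≠ 1) (hk0 : L.get k0 % 2 = 1 ∧ L.get k0 ≠ 1) :
    IsStronglyAntimagic (DoubleSpider s L R) := by
  obtain ⟨top, htopdef⟩ : ∃ top : Fin L.length → Prop,
    ∀ i, top i ↔ (i ≠ i0 ∧ L.get i % 2 = 1 ∧ L.get i ≠ 1) := ⟨_, fun i => Iff.rfl⟩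
  have htop : ∀ i, top i → L.get i % 2 = 1 ∧ L.get i ≠ 1 := fun i h => ((htopdef i).1 h).2
  have hg := goodY s L top htop
  obtain ⟨C, hC⟩ : ∃ C : DSVert s L R → ℕ,
    C = cls top (fun a => if a = s then 5 else if (s - a) % 2 = 1 then 4 else 0) 3 := ⟨_, rfl⟩
  have hvR : C (vR s L R) = 5 := by
    rw [cls_vR hC hs, if_pos rfl]
  have hc1 : C (c1 hs) = 4 := by
    rw [cls_c1 hC hs, if_neg (by omega), if_pos (by omega)]
  have hCi0 : C (lgp hL i0) = 0 := by
    rw [cls_lgp hC, if_neg hi0.2, if_neg (by rw [htopdef]; simp), if_pos (by omega)]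
  have hcnt : cnt C 4 ≤ cnt C 3 + cnt C 0 := by
    have hcore : ∀ a : Fin (s + 1), C (Sum.inl a) = 4 → (a : ℕ) % 2 = 1 ∧ (a : ℕ) < s := by
      intro a ha
      have := a.2
      rw [cls_core hC] at ha
      split_ifs at ha <;> omega
    apply highs_le hg hC
      (fun a => if (a : ℕ) = 1 then lgp hL i0 else Sum.inl ⟨(a : ℕ) - 1, by omega⟩)
    · intro a ha
      have h1 := hcore a ha
      by_cases h2 : (a : ℕ) = 1
      · rw [if_pos h2, hCi0]
      · rw [if_neg h2, cls_core hC, if_neg (by simp; omega), if_neg (by simp; omega),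
          if_neg (by simp; omega)]
    · intro a b ha hb hab
      have h1 := hcore a ha
      have h2 := hcore b hb
      by_cases h3 : (a : ℕ) = 1
      · by_cases h4 : (b : ℕ) = 1
        · ext; omega
        · rw [if_pos h3, if_neg h4] at hab
          simp [lgp] at hab
      · by_cases h4 : (b : ℕ) = 1
        · rw [if_neg h3, if_pos h4] at hab
          simp [lgp] at hab
        · rw [if_neg h3, if_neg h4] at hab
          simp only [Sum.inl.injEq, Fin.mk.injEq] at hab
          ext; omega
    · intro a i j ha h
      by_cases h3 : (a : ℕ) = 1
      · rw [if_pos h3] at h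
        simp only [lgp, Sum.inr.injEq, Sum.inl.injEq, Sigma.mk.injEq] at h
        obtain ⟨rfl, hx⟩ := h
        rw [← eq_of_heq hx]
      · rw [if_neg h3] at h
        simp at h
  have hSR := sumR_ge hg hC hR hone hb
  have hSR' := sumR_le hC hR hb
  obtain ⟨i1, hi1, hlast⟩ := lastTop hs hL htop hC ⟨k0, (htopdef k0).2 ⟨hik, hk0⟩⟩
  have hleg : ∀ k, k ≠ i1 → k ≠ i0 → cnt C 1 + 1 ≤ rk C tau (lgp hL k) := by
    intro k _ hk
    apply cnt_lt_rk
    have h2 := hL _ (List.get_mem L k)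
    rw [cls_lgp hC]
    by_cases hk1 : top k
    · rw [if_pos hk1]; split_ifs <;> omega
    · have h3 : ¬ (L.get k % 2 = 1 ∧ L.get k ≠ 1) := fun h => hk1 ((htopdef k).2 ⟨hk, h⟩)
      rw [if_neg hk1]; split_ifs <;> omega
  have hSL := sum_fin_ge2 (fun i => rk C tau (lgp hL i)) i1 i0 ((htopdef i1).1 hi1).1
    (cnt C 1 + 1) hleg
  refine reduction hg hs hL hR hone hb hab ?_ ?_ ?_ <;> rw [← hC]
  · omega
  · intro x y hxy
    refine vr_links hg hC hR hone hb hcnt ?_ x y hxy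
    intro z hz
    omega
  · have h1 : cnt C 3 < rk C tau (c1 hs) := cnt_lt_rk (by omega)
    have h2 := rk_pos (c := C) (t := tau) (lgp hL i0)
    have h4 := num2 (b := R.length) (x := L.length - 2) (K := cnt C 1) (by omega)
    omega

theorem caseS3 (hs : 1 ≤ s) (hL : ∀ ℓ ∈ L, 1 ≤ ℓ) (hR : ∀ ℓ ∈ R, 1 ≤ ℓ)
    (hone : ∀ ℓ ∈ R, ℓ = 1) (hb : 2 ≤ R.length) (hab : R.length < L.length)
    (hodd : s % 2 = 1) (k0 : Fin L.length)
    (hk0 : L.get k0 % 2 = 1 ∧ L.get k0 ≠ 1) :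
    IsStronglyAntimagic (DoubleSpider s L R) := by
  obtain ⟨top, htopdef⟩ : ∃ top : Fin L.length → Prop,
    ∀ i, top i ↔ (L.get i % 2 = 1 ∧ L.get i ≠ 1) := ⟨_, fun i => Iff.rfl⟩
  have htop : ∀ i, top i → L.get i % 2 = 1 ∧ L.get i ≠ 1 := fun i h => (htopdef i).1 h
  have hg := goodY s L top htop
  obtain ⟨C, hC⟩ : ∃ C : DSVert s L R → ℕ,
    C = cls top (fun a => if a = s then 5 else if (s - a) % 2 = 1 then 4 else 0) 3 := ⟨_, rfl⟩
  have hvR : C (vR s L R) = 5 := by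
    rw [cls_vR hC hs, if_pos rfl]
  have hcnt : cnt C 4 ≤ cnt C 3 + cnt C 0 := by
    have hcore : ∀ a : Fin (s + 1), C (Sum.inl a) = 4 →
        (a : ℕ) % 2 = 0 ∧ 0 < (a : ℕ) ∧ (a : ℕ) < s := by
      intro a ha
      have := a.2
      rw [cls_core hC] at ha
      split_ifs at ha <;> omega
    apply highs_le hg hC (fun a => Sum.inl ⟨(a : ℕ) - 1, by omega⟩)
    · intro a ha
      have h1 := hcore a ha
      rw [cls_core hC, if_neg (by simp; omega), if_neg (by simp; omega),
          if_neg (by simp; omega)]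
    · intro a b ha hb hab
      have h1 := hcore a ha
      have h2 := hcore b hb
      simp only [Sum.inl.injEq, Fin.mk.injEq] at hab
      ext; omega
    · intro a i j ha h
      simp at h
  have hSR := sumR_ge hg hC hR hone hb
  have hSR' := sumR_le hC hR hb
  obtain ⟨i1, hi1, hlast⟩ := lastTop hs hL htop hC ⟨k0, (htopdef k0).2 hk0⟩
  have hcl : ∀ k, (L.get k = 1 ∧ C (lgp hL k) = 2) ∨ 4 ≤ C (lgp hL k) := by
    intro k
    have h2 := hL _ (List.get_mem L k)
    rw [cls_lgp hC]
    by_cases hk1 : top k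
    · rw [if_pos hk1]; split_ifs <;> omega
    · have h3 : ¬ (L.get k % 2 = 1 ∧ L.get k ≠ 1) := fun h => hk1 ((htopdef k).2 h)
      rw [if_neg hk1]; split_ifs <;> omega
  have hleg : ∀ k, cnt C 1 + 1 ≤ rk C tau (lgp hL k) := by
    intro k
    apply cnt_lt_rk
    have := hcl k
    omega
  -- a second leg with a large label
  have hsecond : ∃ i2, i2 ≠ i1 ∧ cnt C 3 ≤ rk C tau (lgp hL i2) + 1 := by
    by_cases hex : ∃ i2, i2 ≠ i1 ∧ 4 ≤ C (lgp hL i2)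
    · obtain ⟨i2, h1, h2⟩ := hex
      refine ⟨i2, h1, ?_⟩
      have : cnt C 3 < rk C tau (lgp hL i2) := cnt_lt_rk (by omega)
      omega
    have hsm : ∀ k, k ≠ i1 → L.get k = 1 ∧ C (lgp hL k) = 2 := by
      intro k hk
      rcases hcl k with h | h
      · exact h
      · exact absurd ⟨k, hk, h⟩ hex
    have hne : (Finset.univ.erase i1).Nonempty := by
      rw [← Finset.card_pos, Finset.card_erase_of_mem (Finset.mem_univ _)]
      simp
      omega
    obtain ⟨i2, hi2, hmax⟩ := Finset.exists_max_image (Finset.univ.erase i1)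
      (fun i => (i : ℕ)) hne
    have hi2 := Finset.ne_of_mem_erase hi2
    refine ⟨i2, hi2, ?_⟩
    have hCi2 := (hsm i2 hi2).2
    have hx := cls_rp hC hR ⟨R.length - 1, by omega⟩
    rw [if_pos (by simp; omega)] at hx
    refine (cnt3_le_last hg hC hR hone ⟨R.length - 1, by omega⟩ (by simp; omega)).trans ?_
    apply rk_le_succ
    intro z hz hkey
    rw [hx] at hkey
    rw [hCi2]
    rcases z with (a | ⟨i', j⟩ | p)
    · have h1 := hg.hcc a
      have h2 := cls_core hC a
      have := a.2
      by_cases h0 : (a : ℕ) = 0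
      · rw [if_pos h0] at h2; omega
      · rw [if_neg h0] at h2
        have := h1 (by omega) (by omega)
        omega
    · by_cases h2 : C (Sum.inr (Sum.inl ⟨i', j⟩)) = 2
      · right
        refine ⟨h2, ?_⟩
        have h3 : L.get i' = 1 := by
          by_contra hne
          rw [hC] at h2
          simp only [cls] at h2
          rw [if_neg hne] at h2
          split_ifs at h2 <;> omega
        have h4 : i' ≠ i1 := by
          rintro rfl
          exact (htop _ hi1).2 h3
        have h5 := hmax i' (Finset.mem_erase.2 ⟨h4, Finset.mem_univ _⟩)
        have h6 := Nat.mul_le_mul_left (L.sum + 1) h5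
        simp only [tau, lgp]
        omega
      · have := cls_leg (s := s) (R := R) (top := top)
          (cc := (fun a => if a = s then 5 else if (s - a) % 2 = 1 then 4 else 0)) (rl := 3) i' j
        rw [← hC] at this
        omega
    · rw [rp_surj hR hone] at hz hkey ⊢
      have h1 := cls_rp hC hR p.1
      by_cases h2 : (p.1 : ℕ) + 1 = R.length
      · exfalso
        apply hz
        congr 1
        ext
        simp
        omega
      · rw [if_neg h2] at h1
        omega
  obtain ⟨i2, hi2, hsec⟩ := hsecond
  have hSL := sum_fin_ge2 (fun i => rk C tau (lgp hL i)) i1 i2 hi2.symm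
    (cnt C 1 + 1) (fun k _ _ => hleg k)
  refine reduction hg hs hL hR hone hb hab ?_ ?_ ?_ <;> rw [← hC]
  · omega
  · intro x y hxy
    refine vr_links hg hC hR hone hb hcnt ?_ x y hxy
    intro z hz
    omega
  · have h4 := num2 (b := R.length) (x := L.length - 2) (K := cnt C 1) (by omega)
    have hCi1 : C (lgp hL i1) = 5 := by
      rw [cls_lgp hC, if_neg (htop i1 hi1).2, if_pos hi1]
    have h5 : cnt C 3 < rk C tau (lgp hL i1) := cnt_lt_rk (by omega)
    by_cases hs1 : s = 1
    · have e : vR s L R = c1 hs := by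
        simp only [vR, c1]
        congr 1
        ext
        simpa using hs1
      rw [e]
      have := hleg i2
      omega
    · have hc1 : C (c1 hs) = 0 := by
        rw [cls_c1 hC hs, if_neg (by omega), if_neg (by omega)]
      have hpos := get_lt i1
      have hodd1 := htop i1 hi1
      have hlf : (L.get i1 - 1) < L.get i1 := by omega
      have hCl : C (Sum.inr (Sum.inl ⟨i1, ⟨L.get i1 - 1, hlf⟩⟩)) = 0 := by
        rw [hC]
        simp only [cls]
        rw [if_neg hodd1.2, if_neg (by omega), if_pos (by omega)]
      have h6 : rk C tau (Sum.inr (Sum.inl ⟨i1, ⟨L.get i1 - 1, hlf⟩⟩)) < rk C tau (c1 hs) := by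
        apply rk_lt
        right
        refine ⟨by omega, ?_⟩
        exact leg_lt_core i1 ⟨L.get i1 - 1, hlf⟩ 1
      have h7 := rk_pos (c := C) (t := tau) (Sum.inr (Sum.inl ⟨i1, ⟨L.get i1 - 1, hlf⟩⟩))
      omega

end Cases

/-- Let `DS(L, Pᶜᵒʳᵉ, R)` be a double spider with
`deg(v_l) > deg(v_r) ≥ 3` such that `R` contains no even path and no odd path of length
at least 3, i.e. every leg in `R` has length exactly one.  Then `DS(L, Pᶜᵒʳᵉ, R)` is
strongly antimagic. -/
theorem doubleSpider_right_all_one_isStronglyAntimagic (s : ℕ) (hs : 1 ≤ s) (L R : List ℕ)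
    (hL : ∀ ℓ ∈ L, 1 ≤ ℓ) (hR : ∀ ℓ ∈ R, 1 ≤ ℓ)
    (hlr : (DoubleSpider s L R).degree (vR s L R) < (DoubleSpider s L R).degree (vL s L R))
    (hr : 3 ≤ (DoubleSpider s L R).degree (vR s L R))
    (hone : ∀ ℓ ∈ R, ℓ = 1) :
    IsStronglyAntimagic (DoubleSpider s L R) := by
  have hT := ds_treeLike (s := s) (L := L) (R := R) hone
  have hDR := hT.degree_eq' (vR s L R) (inc (vR s L R)) (fun x => mem_inc)
  have hDL := hT.degree_eq' (vL s L R) (inc (vL s L R)) (fun x => mem_inc)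
  rw [Finset.card_eq_sum_ones, sum_vR hs hR hone (fun _ => 1)] at hDR
  rw [Finset.card_eq_sum_ones, sum_vL hs hL (fun _ => 1)] at hDL
  simp only [Finset.sum_const, Finset.card_univ, Fintype.card_fin, smul_eq_mul, mul_one] at hDR hDL
  have hb : 2 ≤ R.length := by omega
  have hab : R.length < L.length := by omega
  by_cases heven : s % 2 = 0
  · by_cases h2 : ∃ i k : Fin L.length, k ≠ i ∧ (L.get i % 2 = 1 ∧ L.get i ≠ 1) ∧
        (L.get k % 2 = 1 ∧ L.get k ≠ 1)
    · obtain ⟨i, k, h, hi, hk⟩ := h2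
      exact caseS4 hs hL hR hone hb hab heven i k h hi hk
    · have hex : ∃ i0 : Fin L.length, ∀ i, i ≠ i0 → L.get i % 2 = 0 ∨ L.get i = 1 := by
        by_cases h1 : ∃ i : Fin L.length, L.get i % 2 = 1 ∧ L.get i ≠ 1
        · obtain ⟨i0, hi0⟩ := h1
          refine ⟨i0, fun i hi => ?_⟩
          by_contra hne
          exact h2 ⟨i0, i, hi, hi0, by omega⟩
        · refine ⟨⟨0, by omega⟩, fun i _ => ?_⟩
          by_contra hne
          exact h1 ⟨i, by omega⟩
      obtain ⟨i0, hi0⟩ := hex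
      exact caseS1 hs hL hR hone hb hab heven i0 hi0
  · by_cases h1 : ∃ i : Fin L.length, L.get i % 2 = 1 ∧ L.get i ≠ 1
    · obtain ⟨i0, hi0⟩ := h1
      exact caseS3 hs hL hR hone hb hab (by omega) i0 hi0
    · refine caseS2 hs hL hR hone hb hab (by omega) (fun i => ?_)
      by_contra hne
      exact h1 ⟨i, by omega⟩

end
end
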